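/- arXiv:1405.6238 — 8 statements merged into one kernel-verified Lean document; each statement's English description precedes it below -/
import Mathlib

section
/- Let F = ℝ or ℂ, let A ∈ F^{I×R} and C ∈ F^{K×R} have nonzero columns, let T = [A,A,C]_R, and set m_C := R − rank(C) + 2. Assume: (i) k_A + k_C ≥ R + 2; (ii) condition (U_{m_C}) holds for the pair (A,A). Then the rank of T equals R and the SFS-CPD of T is unique. -/
/-!
Write `a_r`, `c_r` for the columns of `A`, `C`. Let `T = [a', b', c']_{R'}` be any decomposition
with `R' ≤ R`. Contracting the third mode with a functional `φ` gives
`A · Diag(φ(c_r)) · Aᵀ = A' · Diag(φ(c'_r)) · B'ᵀ`, whose rank is at most the number of nonzero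
`φ(c'_r)`. Condition `(U_m)` upgrades to `ω(λ) ≤ rank (A Diag(λ) Aᵀ)` as soon as this rank is at
most `m - 1` (`CondU.omega_le_rank`), so `ω(φ(c)) ≤ ω(φ(c'))` whenever `ω(φ(c')) ≤ m_C - 1`.

This is the hypothesis of Kruskal's permutation lemma (`kruskal_permutation`). Its proof counts
columns in flats, i.e. subspaces spanned by columns `c'_j`: by downward induction on flats `V`,
`#{j : c'_j ∈ V} + (R - R') ≤ #{i : c_i ∈ V}` (`kruskal_flat_count`). The zero flat gives `R' = R`,
hence the value of the rank; the lines `span c'_j` give that the `c'_j` are the `c_r` up to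
permutation and scaling.

Once the third factors agree, `Σ_r φ(c_r) a_r a_rᵀ = Σ_r φ(c_r) l_r b_r b_rᵀ` for all `φ`. Taking
`φ` to vanish on `k_C - 1` columns leaves a sum over a set `J` of at most `k_A - 1` indices, which
forces `b_r ∈ span {a_j : j ∈ J}` for every such `J ∋ r`; varying `J` leaves only `b_r ∈ span {a_r}`
(`proportional_of_common_factor`), and comparing coefficients gives `l_r b_r b_rᵀ = a_r a_rᵀ`.
-/

open MeasureTheory

noncomputable section

/-- The tensor `[A,B,C]_R` with entries `t_{ijk} = Σ_r A i r * B j r * C k r`. -/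
def cpdSum {F : Type*} [CommRing F] {I J K R : ℕ}
    (A : Fin I → Fin R → F) (B : Fin J → Fin R → F) (C : Fin K → Fin R → F) :
    Fin I → Fin J → Fin K → F :=
  fun i j k => ∑ r : Fin R, A i r * B j r * C k r

/-- `T` is the sum of the `R` rank-1 terms `a_r ∘ b_r ∘ c_r` with all vectors nonzero. -/
def IsPD {F : Type*} [CommRing F] {I J K : ℕ} (T : Fin I → Fin J → Fin K → F) (R : ℕ)
    (a : Fin R → Fin I → F) (b : Fin R → Fin J → F) (c : Fin R → Fin K → F) : Prop :=
  (∀ r, a r ≠ 0) ∧ (∀ r, b r ≠ 0) ∧ (∀ r, c r ≠ 0) ∧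
    ∀ i j k, T i j k = ∑ r : Fin R, a r i * b r j * c r k

/-- The rank of a third-order tensor: the minimal number of rank-1 terms. -/
def tensorRank {F : Type*} [CommRing F] {I J K : ℕ} (T : Fin I → Fin J → Fin K → F) : ℕ :=
  sInf {R | ∃ a b c, IsPD T R a b c}

/-- The CPD of `T` is unique: any two decompositions of `T` into `tensorRank T` nonzero
rank-1 terms coincide up to permutation of the rank-1 terms. -/
def CPDUnique {F : Type*} [CommRing F] {I J K : ℕ} (T : Fin I → Fin J → Fin K → F) : Prop :=
  ∀ (a a' : Fin (tensorRank T) → Fin I → F) (b b' : Fin (tensorRank T) → Fin J → F)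
    (c c' : Fin (tensorRank T) → Fin K → F),
    IsPD T (tensorRank T) a b c → IsPD T (tensorRank T) a' b' c' →
    ∃ σ : Equiv.Perm (Fin (tensorRank T)),
      ∀ r i j k, a r i * b r j * c r k = a' (σ r) i * b' (σ r) j * c' (σ r) k

/-- The CPD of an `I×J×K` tensor of rank `R` is generically unique over `F`:
the set of triples `(A,B,C)` for which the CPD of `[A,B,C]_R` is not unique has
Lebesgue measure zero. -/
def CPDGenericallyUnique (F : Type*) [CommRing F] [MeasureSpace F] (I J K R : ℕ) : Prop :=
  volume {p : (Fin I → Fin R → F) × (Fin J → Fin R → F) × (Fin K → Fin R → F) |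
    ¬ CPDUnique (cpdSum p.1 p.2.1 p.2.2)} = 0
open MeasureTheory

noncomputable section

/-- The SFS-tensor `[A,A,C]_R` with entries `t_{ijk} = Σ_r A i r * A j r * C k r`. -/
def sfsSum {F : Type*} [CommRing F] {I K R : ℕ}
    (A : Fin I → Fin R → F) (C : Fin K → Fin R → F) :
    Fin I → Fin I → Fin K → F :=
  fun i j k => ∑ r : Fin R, A i r * A j r * C k r

/-- `T` is the sum of the `R` SFS rank-1 terms `a_r ∘ a_r ∘ c_r` with all vectors nonzero. -/
def IsSfsPD {F : Type*} [CommRing F] {I K : ℕ} (T : Fin I → Fin I → Fin K → F) (R : ℕ)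
    (a : Fin R → Fin I → F) (c : Fin R → Fin K → F) : Prop :=
  (∀ r, a r ≠ 0) ∧ (∀ r, c r ≠ 0) ∧
    ∀ i j k, T i j k = ∑ r : Fin R, a r i * a r j * c r k

/-- The SFS-rank of an SFS-tensor: the minimal number of SFS rank-1 terms. -/
def sfsRank {F : Type*} [CommRing F] {I K : ℕ} (T : Fin I → Fin I → Fin K → F) : ℕ :=
  sInf {R | ∃ a c, IsSfsPD T R a c}

/-- The SFS-CPD of `T` is unique: any two decompositions of `T` into `sfsRank T`
SFS rank-1 terms coincide up to permutation of the SFS rank-1 terms. -/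
def SfsCPDUnique {F : Type*} [CommRing F] {I K : ℕ} (T : Fin I → Fin I → Fin K → F) : Prop :=
  ∀ (a a' : Fin (sfsRank T) → Fin I → F) (c c' : Fin (sfsRank T) → Fin K → F),
    IsSfsPD T (sfsRank T) a c → IsSfsPD T (sfsRank T) a' c' →
    ∃ σ : Equiv.Perm (Fin (sfsRank T)),
      ∀ r i j k, a r i * a r j * c r k = a' (σ r) i * a' (σ r) j * c' (σ r) k

/-- The SFS-CPD of an `I×I×K` SFS-tensor of SFS-rank `R` is generically unique over `F`:
the set of pairs `(A,C)` for which the SFS-CPD of `[A,A,C]_R` is not unique has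
Lebesgue measure zero. -/
def SFSGenericallyUnique (F : Type*) [CommRing F] [MeasureSpace F] (I K R : ℕ) : Prop :=
  volume {p : (Fin I → Fin R → F) × (Fin K → Fin R → F) |
    ¬ SfsCPDUnique (sfsSum p.1 p.2)} = 0
open scoped Matrix

/-- The number `ω(λ)` of nonzero entries of a vector. -/
def omegaCount {F : Type*} [Zero F] {R : ℕ} (lam : Fin R → F) : ℕ :=
  Nat.card {r : Fin R // lam r ≠ 0}

/-- The k-rank of a matrix `A`: the largest `k ≤ R` such that every `k` columns of `A`
are linearly independent. -/
def kRank {F : Type*} [Field F] {I R : ℕ} (A : Matrix (Fin I) (Fin R) F) : ℕ :=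
  sSup {k | k ≤ R ∧ ∀ s : Finset (Fin R), s.card = k →
    LinearIndependent F (fun r : {x // x ∈ s} => fun i => A i r.1)}

/-- Condition `(U_m)` for a pair `(A,B)`: whenever
`rank(A·Diag(λ)·Bᵀ) ≤ m−1`, one has `ω(λ) ≤ m−1`. -/
def CondU {F : Type*} [Field F] {I J R : ℕ} (m : ℕ)
    (A : Matrix (Fin I) (Fin R) F) (B : Matrix (Fin J) (Fin R) F) : Prop :=
  ∀ lam : Fin R → F,
    (A * Matrix.diagonal lam * Bᵀ).rank ≤ m - 1 → omegaCount lam ≤ m - 1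

/-- Condition `(W_m)` for a triplet `(A,B,C)`: whenever `λ ∈ range(Cᵀ)` and
`rank(A·Diag(λ)·Bᵀ) ≤ m−1`, one has `ω(λ) ≤ m−1`. -/
def CondW {F : Type*} [Field F] {I J K R : ℕ} (m : ℕ)
    (A : Matrix (Fin I) (Fin R) F) (B : Matrix (Fin J) (Fin R) F)
    (C : Matrix (Fin K) (Fin R) F) : Prop :=
  ∀ lam : Fin R → F, (∃ x : Fin K → F, lam = Cᵀ.mulVec x) →
    (A * Matrix.diagonal lam * Bᵀ).rank ≤ m - 1 → omegaCount lam ≤ m - 1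

/-- The Khatri–Rao (columnwise Kronecker) product `A ⊙ B`. -/
def khatriRao {F : Type*} [CommRing F] {I J R : ℕ}
    (A : Matrix (Fin I) (Fin R) F) (B : Matrix (Fin J) (Fin R) F) :
    Matrix (Fin I × Fin J) (Fin R) F :=
  fun p r => A p.1 r * B p.2 r

/-! ### Kruskal's permutation lemma -/

open Module in
/-- Every flat `V` of `c'` (a subspace spanned by some of the `c' j`) contains at least `R - R'` more
of the `c i` than of the `c' j`. Hyperplanes of the span of `c'` are zero sets of functionals `φ`, so
for them this is the hypothesis `h`; for smaller `V`, sum the inequality over the flats covering `V`,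
which partition the vectors `c' j` outside `V`. -/
theorem kruskal_flat_count {F E : Type*} [Field F] [AddCommGroup E] [Module F E]
    [FiniteDimensional F E] {R R' : ℕ} (c : Fin R → E) (c' : Fin R' → E) (hle : R' ≤ R)
    (h : ∀ φ : E →ₗ[F] F,
      Nat.card {j // φ (c' j) ≠ 0} + finrank F (Submodule.span F (Set.range c')) ≤ R' + 1 →
      Nat.card {i // φ (c i) ≠ 0} ≤ Nat.card {j // φ (c' j) ≠ 0})
    (hcS : ∀ i, c i ∈ Submodule.span F (Set.range c'))
    (V : Submodule F E) (hV : V ≤ Submodule.span F (c' '' {j | c' j ∈ V})) :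
    Nat.card {j // c' j ∈ V} + (R - R') ≤ Nat.card {i // c i ∈ V} := by
  classical
  set S := Submodule.span F (Set.range c') with hS
  have hVS : V ≤ S := hV.trans (Submodule.span_mono (Set.image_subset_range _ _))
  have hc'S : ∀ j, c' j ∈ S := fun j => Submodule.subset_span ⟨j, rfl⟩
  have compl {n : ℕ} (p : Fin n → Prop) : Nat.card {j // p j} + Nat.card {j // ¬ p j} = n := by
    simp only [Nat.card_eq_fintype_card, Fintype.card_subtype]
    simpa using Finset.card_filter_add_card_filter_not (s := (Finset.univ : Finset (Fin n))) p
  induction V using WellFoundedGT.induction with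
  | ind V ih =>
  -- three cases: `V` is the whole span, a hyperplane in it, or smaller
  rcases hVS.eq_or_lt with rfl | hlt
  · simp only [hc'S, hcS]
    simp [hle]
  by_cases hcov : V ⋖ S
  · obtain ⟨w, hwS, hwV⟩ := SetLike.exists_of_lt hlt
    obtain ⟨φ, hφw, hφV⟩ := Submodule.exists_le_ker_of_notMem hwV
    have hker : ∀ u ∈ S, (φ u = 0 ↔ u ∈ V) := by
      intro u hu
      refine ⟨fun h0 => ?_, fun hu => hφV hu⟩
      have h3 : V = LinearMap.ker φ ⊓ S := by
        rcases hcov.eq_or_eq (c := LinearMap.ker φ ⊓ S) (le_inf hφV hVS) inf_le_right with h | h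
        · exact h.symm
        · exact absurd (inf_eq_right.1 h hwS) hφw
      rw [h3]
      exact ⟨h0, hu⟩
    have e1 := compl (fun j => c' j ∈ V)
    have e2 := compl (fun i => c i ∈ V)
    have hφ := h φ
    simp only [ne_eq, hker _ (hc'S _), hker _ (hcS _)] at hφ
    have hd : finrank F S ≤ Nat.card {j // c' j ∈ V} + 1 := by
      have hSV : S = Submodule.span F {w} ⊔ V := by
        refine ((hcov.eq_or_eq le_sup_right (sup_le (by simpa using hwS) hVS)).resolve_left ?_).symm
        exact (Submodule.covBy_span_singleton_sup hwV).lt.ne'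
      have h4 : finrank F V ≤ Nat.card {j // c' j ∈ V} := by
        have h7 := finrank_range_le_card (R := F) (fun j : {j // c' j ∈ V} => c' j)
        rw [← Nat.card_eq_fintype_card] at h7
        refine (Submodule.finrank_mono (hV.trans (Submodule.span_mono ?_))).trans h7
        rintro _ ⟨j, hj, rfl⟩
        exact ⟨⟨j, hj⟩, rfl⟩
      have h5 : finrank F (Submodule.span F {w}) ≤ 1 := by
        simpa using finrank_span_le_card (R := F) ({w} : Set E)
      have h6 := Submodule.finrank_add_le_finrank_add_finrank (Submodule.span F {w}) V
      rw [← hSV] at h6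
      omega
    have := hφ (by omega)
    omega
  · have ext_unique {u w : E} (hu : u ∉ V) (hw : w ∉ V) (h : u ∈ Submodule.span F {w} ⊔ V) :
        Submodule.span F {u} ⊔ V = Submodule.span F {w} ⊔ V := by
      refine ((Submodule.covBy_span_singleton_sup hw).eq_or_eq le_sup_right
        (sup_le ?_ le_sup_right)).resolve_left (Submodule.covBy_span_singleton_sup hu).lt.ne'
      simpa using h
    -- `N` is the set of flats covering `V`
    set X : Fin R' → Submodule F E := fun j => Submodule.span F {c' j} ⊔ V with hX
    set N : Finset (Submodule F E) := (Finset.univ.filter (fun j => c' j ∉ V)).image X with hN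
    have hmem : ∀ W ∈ N, ∃ j, c' j ∉ V ∧ X j = W := by
      intro W hW
      simpa [hN] using hW
    have hmem' : ∀ j, c' j ∉ V → X j ∈ N := by
      intro j hj
      exact Finset.mem_image_of_mem _ (by simpa using hj)
    have hout : ∀ W, W < S → ∃ j, c' j ∉ W := by
      intro W hW
      by_contra! hall
      refine hW.not_ge (Submodule.span_le.2 ?_)
      rintro _ ⟨j, rfl⟩
      exact hall j
    have hN2 : 2 ≤ N.card := by
      obtain ⟨j, hj⟩ := hout V hlt
      have hcj := Submodule.covBy_span_singleton_sup (K := F) hj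
      have hjS : X j ≤ S := sup_le (by simpa using hc'S j) hVS
      obtain ⟨j', hj'⟩ := hout (X j) (hjS.lt_of_ne fun h => hcov (h ▸ hcj))
      refine Finset.one_lt_card.2 ⟨X j, hmem' j hj, X j', hmem' j' fun h => hj' (hcj.le h), ?_⟩
      intro heq
      exact hj' (heq ▸ Submodule.mem_sup_left (Submodule.mem_span_singleton_self _))
    have hsum' : Nat.card {j // c' j ∉ V} = ∑ W ∈ N, Nat.card {j // c' j ∉ V ∧ c' j ∈ W} := by
      simp only [Nat.card_eq_fintype_card, Fintype.card_subtype]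
      rw [Finset.card_eq_sum_card_image X]
      refine Finset.sum_congr rfl fun W hW => ?_
      rw [Finset.filter_filter]
      congr 1
      ext j
      simp only [Finset.mem_filter, Finset.mem_univ, true_and]
      refine and_congr_right fun hj => ?_
      obtain ⟨i, hi, rfl⟩ := hmem W hW
      refine ⟨fun h => h ▸ ?_, fun h => ext_unique hj hi h⟩
      exact Submodule.mem_sup_left (Submodule.mem_span_singleton_self _)
    have hsum : ∑ W ∈ N, Nat.card {i // c i ∉ V ∧ c i ∈ W} ≤ Nat.card {i // c i ∉ V} := by
      simp only [Nat.card_eq_fintype_card, Fintype.card_subtype]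
      rw [← Finset.card_biUnion]
      · refine Finset.card_le_card ?_
        intro i hi
        simp only [Finset.mem_biUnion, Finset.mem_filter, Finset.mem_univ, true_and] at hi ⊢
        exact hi.choose_spec.2.1
      · intro W hW W' hW' hne
        rw [Function.onFun, Finset.disjoint_left]
        intro i hi hi'
        simp only [Finset.mem_filter, Finset.mem_univ, true_and] at hi hi'
        obtain ⟨j, hj, rfl⟩ := hmem W hW
        obtain ⟨j', hj', rfl⟩ := hmem W' hW'
        exact hne ((ext_unique hi.1 hj hi.2).symm.trans (ext_unique hi'.1 hj' hi'.2))
    have hVW : ∀ W ∈ N, V < W ∧ W ≤ S ∧ W ≤ Submodule.span F (c' '' {j | c' j ∈ W}) := by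
      intro W hW
      obtain ⟨j, hj, rfl⟩ := hmem W hW
      have hlt := (Submodule.covBy_span_singleton_sup hj).lt
      refine ⟨hlt, sup_le (by simpa using hc'S j) hVS, sup_le ?_ ?_⟩
      · rw [Submodule.span_singleton_le_iff_mem]
        exact Submodule.subset_span ⟨j, Submodule.mem_sup_left (Submodule.mem_span_singleton_self _), rfl⟩
      · exact hV.trans (Submodule.span_mono (Set.image_mono fun i hi => hlt.le hi))
    have hsplit {n : ℕ} (d : Fin n → E) : ∀ W ∈ N, Nat.card {j // d j ∈ W} =
        Nat.card {j // d j ∈ V} + Nat.card {j // d j ∉ V ∧ d j ∈ W} := by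
      intro W hW
      have hlt := (hVW W hW).1.le
      simp only [Nat.card_eq_fintype_card, Fintype.card_subtype]
      rw [← Finset.card_filter_add_card_filter_not (s := Finset.univ.filter (fun j => d j ∈ W)) (fun j => d j ∈ V)]
      simp only [Finset.filter_filter]
      congr 2
      · ext j; simpa using fun h => hlt h
      · ext j; simp [and_comm]
    have key : ∑ W ∈ N, (Nat.card {j // c' j ∈ V} + Nat.card {j // c' j ∉ V ∧ c' j ∈ W} + (R - R'))
        ≤ ∑ W ∈ N, (Nat.card {i // c i ∈ V} + Nat.card {i // c i ∉ V ∧ c i ∈ W}) := by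
      refine Finset.sum_le_sum fun W hW => ?_
      rw [← hsplit c' W hW, ← hsplit c W hW]
      obtain ⟨h1, h2, h3⟩ := hVW W hW
      exact ih W h1 h3 h2
    simp only [Finset.sum_add_distrib, Finset.sum_const, smul_eq_mul] at key
    have e1 := compl (fun j => c' j ∈ V)
    have e2 := compl (fun i => c i ∈ V)
    by_contra! hcon
    obtain ⟨M, hM⟩ := Nat.exists_eq_add_of_le hN2
    obtain ⟨D, hD⟩ := Nat.exists_eq_add_of_le hle
    have hD' : R - R' = D := by omega
    rw [← hsum', hM, hD'] at key
    rw [hD'] at hcon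
    have := Nat.mul_le_mul_left (1 + M) (Nat.succ_le_of_lt hcon)
    rw [Nat.succ_eq_add_one] at this
    nlinarith

/-- Kruskal's permutation lemma, in terms of functionals: if every `φ` with few nonzero values on `c'`
has at most as many nonzero values on `c`, then `c'` is `c` up to permutation and scaling. -/
theorem kruskal_permutation {F E : Type*} [Field F] [AddCommGroup E] [Module F E]
    [FiniteDimensional F E] {R R' : ℕ} (c : Fin R → E) (c' : Fin R' → E) (hle : R' ≤ R)
    (hc : ∀ i, c i ≠ 0) (hc' : ∀ j, c' j ≠ 0)
    (hpair : ∀ i j, c i ∈ Submodule.span F {c j} → i = j)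
    (h : ∀ φ : E →ₗ[F] F,
      Nat.card {j // φ (c' j) ≠ 0} + Module.finrank F (Submodule.span F (Set.range c')) ≤ R' + 1 →
      Nat.card {i // φ (c i) ≠ 0} ≤ Nat.card {j // φ (c' j) ≠ 0})
    (hcS : ∀ i, c i ∈ Submodule.span F (Set.range c')) :
    R' = R ∧ ∃ σ : Fin R' → Fin R, Function.Injective σ ∧
      ∃ l : Fin R' → F, ∀ j, c' j = l j • c (σ j) := by
  classical
  have hcount := kruskal_flat_count c c' hle h hcS
  have hRR : R' = R := by
    have h0 := hcount ⊥ bot_le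
    simp [hc] at h0
    omega
  refine ⟨hRR, ?_⟩
  have hline : ∀ j, Nat.card {j' // c' j' ∈ Submodule.span F {c' j}} ≤
      Nat.card {i // c i ∈ Submodule.span F {c' j}} := by
    intro j
    refine le_trans (Nat.le_add_right _ _) (hcount (Submodule.span F {c' j}) ?_)
    rw [Submodule.span_singleton_le_iff_mem]
    exact Submodule.subset_span ⟨j, Submodule.mem_span_singleton_self _, rfl⟩
  have hone : ∀ j, Nat.card {i // c i ∈ Submodule.span F {c' j}} ≤ 1 := by
    intro j
    rw [Finite.card_le_one_iff_subsingleton]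
    refine ⟨fun ⟨i, hi⟩ ⟨i', hi'⟩ => Subtype.ext (hpair i i' ?_)⟩
    obtain ⟨t, ht⟩ := Submodule.mem_span_singleton.1 hi
    obtain ⟨t', ht'⟩ := Submodule.mem_span_singleton.1 hi'
    have ht0 : t' ≠ 0 := fun h => hc i' (by rw [← ht', h, zero_smul])
    refine Submodule.mem_span_singleton.2 ⟨t * t'⁻¹, ?_⟩
    rw [← ht', ← ht, smul_smul, mul_assoc, inv_mul_cancel₀ ht0, mul_one]
  have hex : ∀ j, ∃ i, ∃ l : F, c' j = l • c i := by
    intro j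
    have hpos : 0 < Nat.card {j' // c' j' ∈ Submodule.span F {c' j}} :=
      have : Nonempty {j' // c' j' ∈ Submodule.span F {c' j}} :=
        ⟨⟨j, Submodule.mem_span_singleton_self _⟩⟩
      Nat.card_pos
    obtain ⟨⟨i, hi⟩⟩ := (Nat.card_pos_iff.1 (hpos.trans_le (hline j))).1
    obtain ⟨t, ht⟩ := Submodule.mem_span_singleton.1 hi
    have ht0 : t ≠ 0 := fun h => hc i (by rw [← ht, h, zero_smul])
    exact ⟨i, t⁻¹, by rw [← ht, smul_smul, inv_mul_cancel₀ ht0, one_smul]⟩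
  choose σ l hσ using hex
  refine ⟨σ, fun j j' hjj => ?_, l, hσ⟩
  have hsub := Finite.card_le_one_iff_subsingleton.1 ((hline j).trans (hone j))
  have hmem : c' j' ∈ Submodule.span F {c' j} := by
    have ht0 : l j ≠ 0 := fun h => hc' j (by rw [hσ, h, zero_smul])
    refine Submodule.mem_span_singleton.2 ⟨l j' * (l j)⁻¹, ?_⟩
    rw [hσ j, hσ j', hjj, smul_smul, mul_assoc, inv_mul_cancel₀ ht0, mul_one]
  exact congrArg Subtype.val
    (hsub.elim ⟨j, Submodule.mem_span_singleton_self _⟩ ⟨j', hmem⟩)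

/-! ### Decompositions with a common third factor -/

theorem exists_dual_of_linearIndepOn {F E ι : Type*} [Field F] [AddCommGroup E] [Module F E]
    [DecidableEq ι] {v : ι → E} {s : Finset ι} (hs : LinearIndepOn F v (s : Set ι)) {r : ι}
    (hr : r ∈ s) :
    ∃ φ : E →ₗ[F] F, φ (v r) ≠ 0 ∧ ∀ j ∈ s, j ≠ r → φ (v j) = 0 := by
  obtain ⟨φ, h1, h2⟩ := Submodule.exists_le_ker_of_notMem (hs.notMem_span hr)
  exact ⟨φ, h1, fun j hj hjr => h2 (Submodule.subset_span ⟨j, ⟨hj, hjr⟩, rfl⟩)⟩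

/-- If `Σ μ_r a_r a_rᵀ = Σ μ_r l_r b_r b_rᵀ` (stated after contraction with each `y`) and the `a_r`
with `μ_r ≠ 0` are independent, then they span the same space as the corresponding `b_r`: the column
space of the left side is contained in the span of the `b_r`, and dimensions agree. -/
theorem span_image_support_eq {F E : Type*} [Field F] [AddCommGroup E] [Module F E]
    [FiniteDimensional F E] {ι : Type*} [Fintype ι] [DecidableEq ι] (a b : ι → E) (l : ι → F)
    (μ : ι → F) (J : Finset ι) (hJ : ∀ j, j ∈ J ↔ μ j ≠ 0)
    (ha : LinearIndepOn F a (J : Set ι))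
    (h : ∀ y : E →ₗ[F] F, ∑ r, (μ r * y (a r)) • a r = ∑ r, (μ r * (l r * y (b r))) • b r) :
    Submodule.span F (a '' (J : Set ι)) = Submodule.span F (b '' (J : Set ι)) := by
  have h0 : ∀ j, j ∉ J → μ j = 0 := fun j hj => by simpa using mt (hJ j).2 hj
  refine Submodule.eq_of_le_of_finrank_le (Submodule.span_le.2 ?_) ?_
  · rintro _ ⟨j, hj, rfl⟩
    obtain ⟨y, hy1, hy2⟩ := exists_dual_of_linearIndepOn ha hj
    have hy := h y
    rw [Finset.sum_eq_single j] at hy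
    · have hne : μ j * y (a j) ≠ 0 := mul_ne_zero ((hJ j).1 hj) hy1
      rw [SetLike.mem_coe, ← Submodule.smul_mem_iff _ hne, hy]
      refine Submodule.sum_mem _ fun i _ => ?_
      by_cases hi : i ∈ J
      · exact Submodule.smul_mem _ _ (Submodule.subset_span ⟨i, hi, rfl⟩)
      · simp [h0 i hi]
    · intro i _ hij
      by_cases hi : i ∈ J
      · simp [hy2 i hi hij]
      · simp [h0 i hi]
    · simp
  · have e1 : Module.finrank F (Submodule.span F (a '' (J : Set ι))) = J.card := by
      rw [Set.image_eq_range]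
      have := finrank_span_eq_card (R := F) ha
      simpa using this
    rw [e1, Set.image_eq_range]
    have := finrank_range_le_card (R := F) (fun x : (J : Set ι) => b x)
    rw [Set.finrank] at this
    simpa using this

/-- Since any `k_C` of the `c_j` are independent, a functional can vanish outside `J` without
vanishing at a given `r ∈ J`. -/
theorem exists_functional_supported {F G : Type*} [Field F] [AddCommGroup G] [Module F G]
    {R kC : ℕ} (c : Fin R → G)
    (hkC : ∀ s : Finset (Fin R), s.card ≤ kC → LinearIndepOn F c (s : Set (Fin R)))
    (hC1 : 1 ≤ kC) (hCR : kC ≤ R) (r : Fin R) (J : Finset (Fin R)) (hJ : J.card = R - kC + 1)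
    (hr : r ∈ J) :
    ∃ φ : G →ₗ[F] F, φ (c r) ≠ 0 ∧ ∀ j, j ∉ J → φ (c j) = 0 := by
  classical
  have hcard : (insert r Jᶜ).card ≤ kC := by
    refine (Finset.card_insert_le _ _).trans ?_
    rw [Finset.card_compl, Fintype.card_fin]
    omega
  obtain ⟨φ, h1, h2⟩ := exists_dual_of_linearIndepOn (hkC _ hcard) (Finset.mem_insert_self r _)
  refine ⟨φ, h1, fun j hj => h2 j (by simp [hj]) ?_⟩
  rintro rfl
  exact hj hr

/-- If `Σ a_r ∘ a_r ∘ c_r = Σ l_r b_r ∘ b_r ∘ c_r` (stated after contraction of two modes) and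
`k_A + k_C ≥ R + 2`, then each `b_r` is proportional to `a_r`. -/
theorem proportional_of_common_factor {F E G : Type*} [Field F] [AddCommGroup E] [Module F E]
    [FiniteDimensional F E] [AddCommGroup G] [Module F G] {R kA kC : ℕ}
    (a b : Fin R → E) (c : Fin R → G) (l : Fin R → F)
    (hkA : ∀ s : Finset (Fin R), s.card ≤ kA → LinearIndepOn F a (s : Set (Fin R)))
    (hkC : ∀ s : Finset (Fin R), s.card ≤ kC → LinearIndepOn F c (s : Set (Fin R)))
    (hC2 : 2 ≤ kC) (hCR : kC ≤ R) (hk : R + 2 ≤ kA + kC)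
    (h : ∀ (φ : G →ₗ[F] F) (y : E →ₗ[F] F),
      ∑ r, (φ (c r) * y (a r)) • a r = ∑ r, (φ (c r) * (l r * y (b r))) • b r) (r : Fin R) :
    ∃ β : F, b r = β • a r := by
  classical
  have hspan : ∀ J : Finset (Fin R), J.card = R - kC + 1 → r ∈ J →
      b r ∈ Submodule.span F (a '' (J : Set (Fin R))) := by
    intro J hJ hr
    obtain ⟨φ, h1, h2⟩ := exists_functional_supported c hkC (by omega) hCR r J hJ hr
    set J' : Finset (Fin R) := Finset.univ.filter (fun j => φ (c j) ≠ 0) with hJ'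
    have hsub : J' ⊆ J := by
      intro j hj
      by_contra hn
      exact (Finset.mem_filter.1 hj).2 (h2 j hn)
    have := span_image_support_eq a b l (fun j => φ (c j)) J' (by simp [hJ'])
      (hkA _ ((Finset.card_le_card hsub).trans (by omega))) (h φ)
    refine Submodule.span_mono (Set.image_mono (Finset.coe_subset.2 hsub)) ?_
    rw [this]
    exact Submodule.subset_span ⟨r, by simpa [hJ'] using h1, rfl⟩
  obtain ⟨J, hrJ, -, hJc⟩ := Finset.exists_subsuperset_card_eq (Finset.subset_univ {r})
    (n := R - kC + 1) (by simp) (by simp; omega)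
  replace hrJ : r ∈ J := by simpa using hrJ
  have hm := hspan J hJc hrJ
  rw [Submodule.mem_span_image_finset_iff_exists_fun'] at hm
  obtain ⟨α, hα⟩ := hm
  refine ⟨α r, ?_⟩
  rw [← hα]
  refine Finset.sum_eq_single r (fun j hj hjr => ?_) (fun h => absurd hrJ h)
  -- exchanging `j` for an index `j'` outside `J` shows that `a j` has coefficient zero
  obtain ⟨j', hj'⟩ : ∃ j', j' ∉ J := by
    by_contra! hall
    rw [Finset.eq_univ_iff_forall.2 hall, Finset.card_univ, Fintype.card_fin] at hJc
    omega
  have hins : (insert j' J).card ≤ kA := by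
    rw [Finset.card_insert_of_notMem hj']
    omega
  obtain ⟨y, hy1, hy2⟩ := exists_dual_of_linearIndepOn (hkA _ hins)
    (Finset.mem_insert_of_mem hj : j ∈ insert j' J)
  have hJ2c : (insert j' (J.erase j)).card = R - kC + 1 := by
    rw [Finset.card_insert_of_notMem (fun h => hj' (Finset.mem_of_mem_erase h)),
      Finset.card_erase_add_one hj, hJc]
  have hm2 := hspan (insert j' (J.erase j)) hJ2c (by simp [hrJ, Ne.symm hjr])
  have hyb : y (b r) = 0 := by
    have hle : Submodule.span F (a '' (insert j' (J.erase j) : Finset (Fin R))) ≤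
        LinearMap.ker y := by
      rw [Submodule.span_le]
      rintro _ ⟨i, hi, rfl⟩
      simp only [Finset.coe_insert, Set.mem_insert_iff, Finset.mem_coe, Finset.mem_erase] at hi
      refine hy2 i ?_ ?_
      · rcases hi with rfl | hi
        · simp
        · exact Finset.mem_insert_of_mem hi.2
      · rcases hi with rfl | hi
        · rintro rfl
          exact hj' hj
        · exact hi.1
    exact hle hm2
  rw [← hα, map_sum, Finset.sum_eq_single j] at hyb
  · have : α j = 0 := by simpa [hy1] using hyb
    rw [this, zero_smul]
  · intro i hi hij
    rw [map_smul, hy2 i (Finset.mem_insert_of_mem hi) hij, smul_zero]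
  · exact fun h => absurd hj h

/-- Under the identity of `proportional_of_common_factor`, the rank-1 matrices themselves agree:
`l_r b_r b_rᵀ = l_r β² a_r a_rᵀ = a_r a_rᵀ`. -/
theorem terms_eq_of_common_factor {F E G : Type*} [Field F] [AddCommGroup E] [Module F E]
    [FiniteDimensional F E] [AddCommGroup G] [Module F G] {R kA kC : ℕ}
    (a b : Fin R → E) (c : Fin R → G) (l : Fin R → F)
    (hkA : ∀ s : Finset (Fin R), s.card ≤ kA → LinearIndepOn F a (s : Set (Fin R)))
    (hkC : ∀ s : Finset (Fin R), s.card ≤ kC → LinearIndepOn F c (s : Set (Fin R)))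
    (ha : ∀ r, a r ≠ 0) (hC2 : 2 ≤ kC) (hCR : kC ≤ R) (hk : R + 2 ≤ kA + kC)
    (h : ∀ (φ : G →ₗ[F] F) (y : E →ₗ[F] F),
      ∑ r, (φ (c r) * y (a r)) • a r = ∑ r, (φ (c r) * (l r * y (b r))) • b r) (r : Fin R) :
    ∃ β : F, b r = β • a r ∧ l r * β ^ 2 = 1 := by
  classical
  choose β hβ using proportional_of_common_factor a b c l hkA hkC hC2 hCR hk h
  refine ⟨β r, hβ r, ?_⟩
  obtain ⟨J, hrJ, -, hJc⟩ := Finset.exists_subsuperset_card_eq (Finset.subset_univ {r})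
    (n := R - kC + 1) (by simp) (by simp; omega)
  replace hrJ : r ∈ J := by simpa using hrJ
  obtain ⟨φ, hφ1, hφ2⟩ := exists_functional_supported c hkC (by omega) hCR r J hJc hrJ
  obtain ⟨y, hy1, hy2⟩ := exists_dual_of_linearIndepOn (hkA J (by omega)) hrJ
  have hzero : ∀ j, j ≠ r → φ (c j) * y (a j) = 0 := by
    intro j hj
    by_cases hjJ : j ∈ J
    · rw [hy2 j hjJ hj, mul_zero]
    · rw [hφ2 j hjJ, zero_mul]
  have hfin := h φ y
  simp only [hβ, map_smul, smul_smul, smul_eq_mul] at hfin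
  rw [Finset.sum_eq_single r (fun j _ hj => by rw [hzero j hj, zero_smul]) (by simp),
    Finset.sum_eq_single r (fun j _ hj => by
      rw [show φ (c j) * (l j * (β j * y (a j))) * β j
        = φ (c j) * y (a j) * (l j * β j * β j) by ring, hzero j hj, zero_mul, zero_smul])
      (by simp)] at hfin
  have hs := smul_left_injective F (ha r) hfin
  have hne : φ (c r) * y (a r) ≠ 0 := mul_ne_zero hφ1 hy1
  refine mul_left_cancel₀ hne ?_
  rw [mul_one]
  calc _ = φ (c r) * (l r * (β r * y (a r))) * β r := by ring
    _ = _ := hs.symm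

/-! ### The k-rank and condition `(U_m)` -/

/-- The supremum defining `kRank` is attained, and independence passes to smaller subsets. -/
theorem kRank_spec {F : Type*} [Field F] {I R : ℕ} (A : Matrix (Fin I) (Fin R) F) :
    kRank A ≤ R ∧ ∀ s : Finset (Fin R), s.card ≤ kRank A →
      LinearIndepOn F (fun r i => A i r) (s : Set (Fin R)) := by
  have hmem : kRank A ∈ {k | k ≤ R ∧ ∀ s : Finset (Fin R), s.card = k →
      LinearIndependent F (fun r : {x // x ∈ s} => fun i => A i r.1)} := by
    refine Nat.sSup_mem ⟨0, Nat.zero_le _, fun s hs => ?_⟩ ⟨R, fun k hk => hk.1⟩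
    obtain rfl := Finset.card_eq_zero.1 hs
    exact linearIndependent_empty_type
  refine ⟨hmem.1, fun s hs => ?_⟩
  obtain ⟨t, hst, -, ht⟩ := Finset.exists_subsuperset_card_eq (Finset.subset_univ s) hs
    (by simpa using hmem.1)
  have hlin : LinearIndepOn F (fun r i => A i r) (t : Set (Fin R)) := hmem.2 t ht
  exact hlin.mono (Finset.coe_subset.2 hst)

theorem matrix_rank_add_le {F : Type*} [Field F] {m n : ℕ} (M N : Matrix (Fin m) (Fin n) F) :
    (M + N).rank ≤ M.rank + N.rank := by
  rw [Matrix.rank, Matrix.rank, Matrix.rank, Matrix.mulVecLin_add]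
  refine (Submodule.finrank_mono (LinearMap.range_add_le _ _)).trans ?_
  exact Submodule.finrank_add_le_finrank_add_finrank _ _

theorem rank_mul_diagonal_mul_le {F : Type*} [Field F] {I J R : ℕ}
    (A : Matrix (Fin I) (Fin R) F) (B : Matrix (Fin R) (Fin J) F) (lam : Fin R → F) :
    (A * Matrix.diagonal lam * B).rank ≤ omegaCount lam := by
  classical
  refine (Matrix.rank_mul_le_left _ _).trans ((Matrix.rank_mul_le_right _ _).trans ?_)
  rw [Matrix.rank_diagonal, omegaCount, Nat.card_eq_fintype_card]

/-- Condition `(U_m)` with `m ≤ R` implies the stronger bound `ω(λ) ≤ rank` for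
ranks at most `m - 1`. If `ω(λ)` exceeded the rank, turning
zero entries of `λ` into ones until there are exactly `m` nonzero entries would raise the rank by at
most one per entry, hence keep it at most `m - 1`, against `(U_m)`. -/
theorem CondU.omega_le_rank {F : Type*} [Field F] {I J R m : ℕ}
    {A : Matrix (Fin I) (Fin R) F} {B : Matrix (Fin J) (Fin R) F} (h : CondU m A B)
    (hm : 1 ≤ m) (hmR : m ≤ R) (lam : Fin R → F)
    (hrk : (A * Matrix.diagonal lam * Bᵀ).rank ≤ m - 1) :
    omegaCount lam ≤ (A * Matrix.diagonal lam * Bᵀ).rank := by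
  classical
  by_contra! hlt
  have hom : ∀ v : Fin R → F, omegaCount v = (Finset.univ.filter (fun r => v r ≠ 0)).card := by
    intro v
    rw [omegaCount, Nat.card_eq_fintype_card, Fintype.card_subtype]
  set s := Finset.univ.filter (fun r => lam r ≠ 0) with hs
  have hle := h lam hrk
  rw [hom, ← hs] at hle hlt
  obtain ⟨t, hst, -, ht⟩ := Finset.exists_subsuperset_card_eq (Finset.subset_univ s) (n := m)
    (by omega) (by simpa using hmR)
  set μ : Fin R → F := fun r => if r ∈ t \ s then 1 else 0 with hμ
  have hzero : ∀ r, r ∉ s → lam r = 0 := fun r hr => by simpa [hs] using hr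
  have hωμ : omegaCount μ = m - s.card := by
    rw [hom, ← ht, ← Finset.card_sdiff_of_subset hst]
    congr 1
    ext r
    simp [hμ]
  have hωsum : omegaCount (lam + μ) = m := by
    rw [hom, ← ht]
    congr 1
    ext r
    by_cases hr : r ∈ s
    · have hr' : lam r ≠ 0 := by simpa [hs] using hr
      simp [hμ, hr, hr', hst hr]
    · simp [hμ, hr, hzero r hr]
  have hsum : A * Matrix.diagonal (lam + μ) * Bᵀ =
      A * Matrix.diagonal lam * Bᵀ + A * Matrix.diagonal μ * Bᵀ := by
    rw [← Matrix.add_mul, ← Matrix.mul_add, Matrix.diagonal_add]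
    rfl
  have h1 : (A * Matrix.diagonal (lam + μ) * Bᵀ).rank ≤ m - 1 := by
    rw [hsum]
    refine (matrix_rank_add_le _ _).trans ?_
    have := rank_mul_diagonal_mul_le A Bᵀ μ
    omega
  have := h _ h1
  omega

/-! ### Uniqueness of the decomposition -/

/-- Equal tensors have equal contractions of the third mode with a functional `φ`. -/
theorem contract_eq {F : Type*} [Field F] {I J K R R' : ℕ}
    {a : Fin R → Fin I → F} {b : Fin R → Fin J → F} {c : Fin R → Fin K → F}
    {a' : Fin R' → Fin I → F} {b' : Fin R' → Fin J → F} {c' : Fin R' → Fin K → F}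
    (h : ∀ i j k, ∑ r, a r i * b r j * c r k = ∑ r, a' r i * b' r j * c' r k)
    (φ : (Fin K → F) →ₗ[F] F) (i : Fin I) (j : Fin J) :
    ∑ r, a r i * b r j * φ (c r) = ∑ r, a' r i * b' r j * φ (c' r) := by
  have h0 : ∑ r, (a r i * b r j) • c r = ∑ r, (a' r i * b' r j) • c' r := by
    ext k
    simpa using h i j k
  simpa using congrArg φ h0

/-- Every decomposition of `[A,A,C]_R` into at most `R` rank-1 terms, symmetric or not, has exactly
`R` terms, and its third factor agrees with `C` up to permutation and scaling of columns. -/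
theorem third_factor_unique {F : Type*} [Field F] {I K R R' : ℕ}
    (A : Matrix (Fin I) (Fin R) F) (C : Matrix (Fin K) (Fin R) F)
    (hC : ∀ r, (fun k => C k r) ≠ 0)
    (h1 : R + 2 ≤ kRank A + kRank C)
    (h2 : CondU (R - C.rank + 2) A A) (hle : R' ≤ R)
    (a b : Fin R' → Fin I → F) (c : Fin R' → Fin K → F)
    (h : IsPD (sfsSum A C) R' a b c) :
    R' = R ∧ ∃ σ : Fin R' → Fin R, Function.Injective σ ∧
      ∃ l : Fin R' → F, ∀ j, c j = l j • (fun k => C k (σ j)) := by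
  classical
  obtain ⟨ha, hb, hc, hT⟩ := h
  obtain ⟨hAR, -⟩ := kRank_spec A
  obtain ⟨hCR, hCind⟩ := kRank_spec C
  have hpair : ∀ i j, (fun k => C k i) ∈ Submodule.span F {fun k => C k j} → i = j := by
    intro i j hij
    by_contra hne
    have hcard : ({i, j} : Finset (Fin R)).card ≤ kRank C := Finset.card_le_two.trans (by omega)
    have := (hCind _ hcard).notMem_span (i := i) (by simp)
    refine this (Submodule.span_mono ?_ hij)
    rintro _ rfl
    exact ⟨j, ⟨by simp, fun h => hne h.symm⟩, rfl⟩
  have hrank : C.rank = Module.finrank F (Submodule.span F (Set.range fun r k => C k r)) :=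
    C.rank_eq_finrank_span_cols
  -- needed so that `m_C = R - rank C + 2 ≤ R`
  have hrC2 : 2 ≤ C.rank := by
    obtain ⟨s, -, hs⟩ := Finset.exists_subset_card_eq
      (s := (Finset.univ : Finset (Fin R))) (n := 2) (by simp; omega)
    have hlin := hCind s (by omega)
    have hfr := finrank_span_eq_card (R := F) hlin
    rw [hrank]
    have : Fintype.card (s : Set (Fin R)) = 2 := by simpa using hs
    rw [← this, ← hfr]
    refine Submodule.finrank_mono (Submodule.span_mono ?_)
    rintro _ ⟨r, rfl⟩
    exact ⟨r, rfl⟩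
  have hrCR : C.rank ≤ R := C.rank_le_width
  -- contracting with `φ` equates a diagonal form in `A` with one in `(a, b)`
  have hφ : ∀ φ : (Fin K → F) →ₗ[F] F,
      Nat.card {j // φ (c j) ≠ 0} ≤ R - C.rank + 1 →
      Nat.card {i // φ (fun k => C k i) ≠ 0} ≤ Nat.card {j // φ (c j) ≠ 0} := by
    intro φ hω
    have hM : A * Matrix.diagonal (fun i => φ (fun k => C k i)) * Aᵀ =
        (Matrix.of a)ᵀ * Matrix.diagonal (fun j => φ (c j)) * Matrix.of b := by
      ext i j
      have := contract_eq (a := fun r i => A i r) (b := fun r i => A i r)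
        (c := fun r k => C k r) hT φ i j
      rw [Matrix.mul_apply, Matrix.mul_apply]
      simp only [Matrix.mul_diagonal, Matrix.transpose_apply, Matrix.of_apply]
      calc _ = _ := Finset.sum_congr rfl fun r _ => by ring
        _ = _ := this
        _ = _ := Finset.sum_congr rfl fun r _ => by ring
    have hr : (A * Matrix.diagonal (fun i => φ (fun k => C k i)) * Aᵀ).rank ≤
        Nat.card {j // φ (c j) ≠ 0} := by
      rw [hM]
      exact rank_mul_diagonal_mul_le _ _ _
    exact (h2.omega_le_rank (by omega) (by omega) _ (by omega)).trans hr
  have hcS : ∀ i, (fun k => C k i) ∈ Submodule.span F (Set.range c) := by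
    intro i
    by_contra hi
    obtain ⟨φ, hφ1, hφ2⟩ := Submodule.exists_le_ker_of_notMem hi
    have h0 : ∀ j, φ (c j) = 0 := fun j => hφ2 (Submodule.subset_span ⟨j, rfl⟩)
    have := hφ φ (by simp [h0])
    simp only [h0, ne_eq, not_true_eq_false, Nat.card_of_isEmpty, Nat.le_zero] at this
    have : Nonempty {i // ¬ φ (fun k => C k i) = 0} := ⟨⟨i, hφ1⟩⟩
    exact Nat.card_pos.ne' ‹Nat.card {i // ¬ φ (fun k => C k i) = 0} = 0›
  have hrk : C.rank ≤ Module.finrank F (Submodule.span F (Set.range c)) := by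
    rw [hrank]
    refine Submodule.finrank_mono (Submodule.span_le.2 ?_)
    rintro _ ⟨i, rfl⟩
    exact hcS i
  exact kruskal_permutation (fun r k => C k r) c hle hC hc hpair
    (fun φ hle' => hφ φ (by omega)) hcS

/-- Every SFS decomposition of `[A,A,C]_R` with `R` terms is a permutation of the given one. -/
theorem sfs_terms_eq {F : Type*} [Field F] {I K R : ℕ}
    (A : Matrix (Fin I) (Fin R) F) (C : Matrix (Fin K) (Fin R) F)
    (hA : ∀ r, (fun i => A i r) ≠ 0) (hC : ∀ r, (fun k => C k r) ≠ 0)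
    (h1 : R + 2 ≤ kRank A + kRank C)
    (h2 : CondU (R - C.rank + 2) A A)
    (a : Fin R → Fin I → F) (c : Fin R → Fin K → F) (h : IsSfsPD (sfsSum A C) R a c) :
    ∃ σ : Equiv.Perm (Fin R), ∀ r i j k,
      a r i * a r j * c r k = A i (σ r) * A j (σ r) * C k (σ r) := by
  classical
  obtain ⟨ha, hc, hT⟩ := h
  obtain ⟨-, σ, hσ, l, hl⟩ := third_factor_unique A C hC h1 h2 le_rfl a a c ⟨ha, ha, hc, hT⟩
  obtain ⟨hAR, hAind⟩ := kRank_spec A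
  obtain ⟨hCR, hCind⟩ := kRank_spec C
  set τ : Equiv.Perm (Fin R) := Equiv.ofBijective σ (Finite.injective_iff_bijective.1 hσ) with hτ
  have hτσ : ∀ r, τ r = σ r := fun r => rfl
  have key := terms_eq_of_common_factor (fun r i => A i r) (fun r => a (τ.symm r))
    (fun r k => C k r) (fun r => l (τ.symm r)) hAind hCind hA (by omega) hCR h1 (by
      intro φ y
      have hcontr := contract_eq (a := fun r i => A i r) (b := fun r i => A i r)
        (c := fun r k => C k r) hT φ
      have hvec : ∀ i, ∑ r, (φ (fun k => C k r) * A i r) • (fun j => A j r) =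
          ∑ r, (φ (c r) * a r i) • a r := by
        intro i
        ext j
        simp only [Finset.sum_apply, Pi.smul_apply, smul_eq_mul]
        calc _ = _ := Finset.sum_congr rfl fun r _ => by ring
          _ = _ := hcontr i j
          _ = _ := Finset.sum_congr rfl fun r _ => by ring
      rw [← Equiv.sum_comp τ (fun r => (φ (fun k => C k r) *
        (l (τ.symm r) * y (a (τ.symm r)))) • a (τ.symm r))]
      simp only [Equiv.symm_apply_apply]
      ext i
      have hy := congrArg y (hvec i)
      simp only [map_sum, map_smul, smul_eq_mul] at hy
      simp only [Finset.sum_apply, Pi.smul_apply, smul_eq_mul]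
      calc _ = _ := Finset.sum_congr rfl fun r _ => by ring
        _ = _ := hy
        _ = _ := Finset.sum_congr rfl fun r _ => by
          rw [hl r, map_smul, smul_eq_mul, hτσ]
          ring)
  refine ⟨τ, fun r i j k => ?_⟩
  obtain ⟨β, hβ, hβ1⟩ := key (τ r)
  simp only [Equiv.symm_apply_apply] at hβ hβ1
  have e1 : ∀ i, a r i = β * A i (τ r) := fun i => by simpa using congrFun hβ i
  have e2 : c r k = l r * C k (τ r) := by simpa [hτσ] using congrFun (hl r) k
  rw [e1, e1, e2]
  linear_combination A i (τ r) * A j (τ r) * C k (τ r) * hβ1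

/-- Deterministic `(U_{m_C})`-based uniqueness condition for the
SFS-CPD. -/
theorem statement6 {F : Type*} [RCLike F] {I K R : ℕ}
    (A : Matrix (Fin I) (Fin R) F) (C : Matrix (Fin K) (Fin R) F)
    (hA : ∀ r, (fun i => A i r) ≠ 0) (hC : ∀ r, (fun k => C k r) ≠ 0)
    (h1 : R + 2 ≤ kRank A + kRank C)
    (h2 : CondU (R - C.rank + 2) A A) :
    tensorRank (sfsSum A C) = R ∧ SfsCPDUnique (sfsSum A C) := by
  have hself : IsSfsPD (sfsSum A C) R (fun r i => A i r) (fun r k => C k r) :=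
    ⟨hA, hC, fun _ _ _ => rfl⟩
  have hlow : ∀ n a b c, IsPD (sfsSum A C) n a b c → R ≤ n := by
    intro n a b c h
    by_contra! hlt
    exact hlt.ne (third_factor_unique A C hC h1 h2 hlt.le a b c h).1
  have hrank : tensorRank (sfsSum A C) = R := by
    refine le_antisymm (Nat.sInf_le ⟨_, _, _, hA, hA, hC, hself.2.2⟩) ?_
    refine le_csInf ⟨R, _, _, _, hA, hA, hC, hself.2.2⟩ ?_
    rintro n ⟨a, b, c, h⟩
    exact hlow n a b c h
  have hsfs : sfsRank (sfsSum A C) = R := by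
    refine le_antisymm (Nat.sInf_le ⟨_, _, hself⟩) ?_
    refine le_csInf ⟨R, _, _, hself⟩ ?_
    rintro n ⟨a, c, h⟩
    exact hlow n a a c ⟨h.1, h.1, h.2.1, h.2.2⟩
  refine ⟨hrank, ?_⟩
  unfold SfsCPDUnique
  rw [hsfs]
  intro a a' c c' h h'
  obtain ⟨σ, hσ⟩ := sfs_terms_eq A C hA hC h1 h2 a c h
  obtain ⟨σ', hσ'⟩ := sfs_terms_eq A C hA hC h1 h2 a' c' h'
  refine ⟨σ.trans σ'.symm, fun r i j k => ?_⟩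
  rw [hσ, hσ']
  simp
end
end
end

section
/- Let I, J, K, R be positive integers and set m := R − K + 2. Then the following two conditions are equivalent: (a) 2 ≤ I ≤ J ≤ K ≤ R and R ≤ (I + J + 2K − 2 − √((I−J)² + 4K))/2; (b) m − 1 ≤ I ≤ J ≤ K ≤ R and R ≤ (I + 1 − m)(J + 1 − m) + m − 2. -/
/-!
Put `a = I + 1 - m` and `b = J + 1 - m`. Since `R = K + m - 2`, the integer inequality in (b)
says `K ≤ a * b`, while the real inequality in (a) says `√((a - b)² + 4K) ≤ a + b`, that is,
`0 ≤ a + b` and `(a - b)² + 4K ≤ (a + b)²`, the latter being `K ≤ a * b` again. As `K > 0`, the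
product `a * b` is positive, so the conditions `0 ≤ a + b`, `0 ≤ a` and `1 ≤ a` on the signs are
interchangeable when `a ≤ b`; finally `1 ≤ a` with `K ≤ R` gives `2 ≤ I`.
-/

/-- For positive integers `I, J, K, R` and `m := R − K + 2`, the bound
`2 ≤ I ≤ J ≤ K ≤ R` with `R ≤ (I + J + 2K − 2 − √((I−J)² + 4K))/2` is equivalent to
`m − 1 ≤ I ≤ J ≤ K ≤ R` with `R ≤ (I + 1 − m)(J + 1 − m) + m − 2`. -/
theorem statement9 (I J K R : ℕ) (hI : 0 < I) (hJ : 0 < J) (hK : 0 < K) (hR : 0 < R)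
    (m : ℤ) (hm : m = (R : ℤ) - (K : ℤ) + 2) :
    ((2 ≤ I ∧ I ≤ J ∧ J ≤ K ∧ K ≤ R) ∧
      (R : ℝ) ≤ ((I : ℝ) + (J : ℝ) + 2 * (K : ℝ) - 2 -
        Real.sqrt (((I : ℝ) - (J : ℝ)) ^ 2 + 4 * (K : ℝ))) / 2) ↔
    ((m - 1 ≤ (I : ℤ) ∧ I ≤ J ∧ J ≤ K ∧ K ≤ R) ∧
      (R : ℤ) ≤ ((I : ℤ) + 1 - m) * ((J : ℤ) + 1 - m) + m - 2) := by
  obtain ⟨a, ha⟩ : ∃ a : ℤ, a = (I : ℤ) + 1 - m := ⟨_, rfl⟩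
  obtain ⟨b, hb⟩ : ∃ b : ℤ, b = (J : ℤ) + 1 - m := ⟨_, rfl⟩
  have haR : (a : ℝ) = (I : ℝ) - 1 - ((R : ℝ) - K) := by
    rw [ha, hm]; push_cast; ring
  have hbR : (b : ℝ) = (J : ℝ) - 1 - ((R : ℝ) - K) := by
    rw [hb, hm]; push_cast; ring
  have key : (R : ℝ) ≤ ((I : ℝ) + (J : ℝ) + 2 * (K : ℝ) - 2 -
      Real.sqrt (((I : ℝ) - (J : ℝ)) ^ 2 + 4 * (K : ℝ))) / 2 ↔
      0 ≤ a + b ∧ (K : ℤ) ≤ a * b := by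
    have hdiff : (I : ℝ) - J = a - b := by rw [haR, hbR]; ring
    have hsqrt : (R : ℝ) ≤ ((I : ℝ) + (J : ℝ) + 2 * (K : ℝ) - 2 -
        Real.sqrt (((I : ℝ) - (J : ℝ)) ^ 2 + 4 * (K : ℝ))) / 2 ↔
        Real.sqrt (((a : ℝ) - b) ^ 2 + 4 * (K : ℝ)) ≤ a + b := by
      rw [hdiff]
      constructor <;> intro h <;> linarith
    rw [hsqrt, Real.sqrt_le_iff]
    have hmul : (K : ℤ) ≤ a * b ↔ (K : ℝ) ≤ a * b := by exact_mod_cast Iff.rfl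
    have hadd : 0 ≤ a + b ↔ (0 : ℝ) ≤ a + b := by exact_mod_cast Iff.rfl
    rw [hmul, hadd]
    constructor <;> rintro ⟨h₁, h₂⟩ <;> exact ⟨h₁, by nlinarith⟩
  rw [key, ← ha, ← hb]
  constructor
  · rintro ⟨⟨h2, hIJ, hJK, hKR⟩, hsum, hprod⟩
    have hapos : 0 ≤ a := by
      by_contra hneg
      have hbpos : 0 ≤ b := by omega
      nlinarith
    exact ⟨⟨by omega, hIJ, hJK, hKR⟩, by omega⟩
  · rintro ⟨⟨h1, hIJ, hJK, hKR⟩, hle⟩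
    have hprod : (K : ℤ) ≤ a * b := by omega
    have hane : a ≠ 0 := by
      rintro rfl
      rw [zero_mul] at hprod
      omega
    exact ⟨⟨by omega, hIJ, hJK, hKR⟩, by omega, hprod⟩
end

section
/- Let I, K, R be positive integers and set m := R − K + 2. Then the following two conditions are equivalent: (a) 2 ≤ I ≤ K ≤ R and R ≤ (2I + 2K + 1 − √(8K + 8I + 1))/2; (b) m − 1 ≤ I ≤ K ≤ R and R ≤ (I² + (3 − 2m)I)/2 + (m − 1)(m − 2)/2. -/
/-!
Put `t = I + K - R`, so that `m = I - t + 2`. The square-root bound says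
`√(8(K + I) + 1) ≤ 2t + 1`; when `2t + 1 ≥ 0`, squaring turns it into `2(K + I) ≤ t² + t`, that is
`2R ≤ t(t - 1)`, which is the polynomial bound. The side conditions agree as well: `m - 1 ≤ I` means
`t ≥ 1`, and this follows from the square-root bound because the root exceeds `1`. Conversely
`t ≥ 1` and `0 < 2R ≤ t(t - 1)` force `t ≥ 2`, whence `I ≥ t ≥ 2` by `K ≤ R`.
-/

/-- For positive integers `I, K, R` and `m := R − K + 2`, the bound
`2 ≤ I ≤ K ≤ R` with `R ≤ (2I + 2K + 1 − √(8K + 8I + 1))/2` is equivalent to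
`m − 1 ≤ I ≤ K ≤ R` with `R ≤ (I² + (3 − 2m)I)/2 + (m − 1)(m − 2)/2`. -/
theorem statement10 (I K R : ℕ) (hI : 0 < I) (hK : 0 < K) (hR : 0 < R)
    (m : ℤ) (hm : m = (R : ℤ) - (K : ℤ) + 2) :
    ((2 ≤ I ∧ I ≤ K ∧ K ≤ R) ∧
      (R : ℝ) ≤ (2 * (I : ℝ) + 2 * (K : ℝ) + 1 -
        Real.sqrt (8 * (K : ℝ) + 8 * (I : ℝ) + 1)) / 2) ↔
    ((m - 1 ≤ (I : ℤ) ∧ I ≤ K ∧ K ≤ R) ∧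
      (R : ℝ) ≤ ((I : ℝ) ^ 2 + (3 - 2 * (m : ℝ)) * (I : ℝ)) / 2 +
        ((m : ℝ) - 1) * ((m : ℝ) - 2) / 2) := by
  have hmR : (m : ℝ) = (R : ℝ) - K + 2 := by rw [hm]; push_cast; ring
  have hI' : (0 : ℝ) < I := by exact_mod_cast hI
  have hK' : (0 : ℝ) < K := by exact_mod_cast hK
  have hR' : (0 : ℝ) < R := by exact_mod_cast hR
  rw [hmR]
  constructor
  · rintro ⟨⟨-, hIK, hKR⟩, h⟩
    have hs : √(8 * (K : ℝ) + 8 * I + 1) ≤ 2 * ((I : ℝ) + K - R) + 1 := by linarith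
    have hs1 : 1 < √(8 * (K : ℝ) + 8 * I + 1) := Real.lt_sqrt_of_sq_lt (by linarith)
    have ht : R < I + K := by
      have : (R : ℝ) < I + K := by linarith
      exact_mod_cast this
    have hsq := (Real.sqrt_le_left (by linarith)).1 hs
    exact ⟨⟨by omega, hIK, hKR⟩, by nlinarith [hsq]⟩
  · rintro ⟨⟨hmI, hIK, hKR⟩, h⟩
    have ht : R + 1 ≤ I + K := by omega
    have ht' : (R : ℝ) + 1 ≤ I + K := by exact_mod_cast ht
    refine ⟨⟨?_, hIK, hKR⟩, ?_⟩
    · -- If `I = 1`, then `t = 1` and the polynomial bound reads `R ≤ 0`.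
      by_contra hlt
      obtain rfl : I = 1 := by omega
      obtain rfl : R = K := by omega
      norm_num at h
      linarith
    · have hs : √(8 * (K : ℝ) + 8 * I + 1) ≤ 2 * ((I : ℝ) + K - R) + 1 :=
        Real.sqrt_le_iff.2 ⟨by linarith, by nlinarith [h]⟩
      linarith
end

section
/- Let I, K, R be positive integers and set m := R − I + 2. Then the following two conditions are equivalent: (a) 2 ≤ K ≤ I ≤ R and R ≤ (K + 3I − 1 − √((K−I)² + 2K + 6I − 3))/2; (b) m − 1 ≤ K ≤ I ≤ R and R ≤ (I + 1 − m)(K + 1 − m). -/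
/-!
Put `A = I + 1 - m = 2I - 1 - R` and `B = K + 1 - m = K + I - 1 - R`, and let `D` be the radicand.
Since `K + 3I - 1 - 2R = A + B + 1`, the bound in (a) says `√D ≤ A + B + 1`, and
`(A + B + 1)² - D = 4 (A B - R)`, so it amounts to `A + B + 1 ≥ 0` and `R ≤ A B`.
As `A B ≥ R > 0`, the integers `A` and `B` have the same sign, and `A + B ≥ -1` forces both to be
positive; this gives `m - 1 ≤ K`, that is, `B ≥ 0`. Conversely `A ≥ B ≥ 0` gives `A + B + 1 ≥ 0`,
and `K = 1` would force `B = I - R ≤ 0`, contradicting `A B ≥ R > 0`.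
-/

/-- The square-root bound in terms of `A = 2I - 1 - R` and `B = K + I - 1 - R`. -/
lemma sqrt_bound_iff (I K R : ℕ) :
    (R : ℝ) ≤ ((K : ℝ) + 3 * (I : ℝ) - 1 -
        Real.sqrt (((K : ℝ) - (I : ℝ)) ^ 2 + 2 * (K : ℝ) + 6 * (I : ℝ) - 3)) / 2 ↔
    (0 ≤ (K : ℤ) + 3 * I - 1 - 2 * R ∧
      (R : ℤ) ≤ (2 * (I : ℤ) - 1 - R) * ((K : ℤ) + I - 1 - R)) := by
  have h1 : (R : ℝ) ≤ ((K : ℝ) + 3 * (I : ℝ) - 1 -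
        Real.sqrt (((K : ℝ) - (I : ℝ)) ^ 2 + 2 * (K : ℝ) + 6 * (I : ℝ) - 3)) / 2 ↔
      Real.sqrt (((K : ℝ) - (I : ℝ)) ^ 2 + 2 * (K : ℝ) + 6 * (I : ℝ) - 3) ≤
        (K : ℝ) + 3 * I - 1 - 2 * R := by
    constructor <;> intro h <;> linarith
  rw [h1, Real.sqrt_le_iff, ← @Int.cast_le ℝ, ← @Int.cast_le ℝ]
  push_cast
  refine and_congr Iff.rfl ?_
  constructor <;> intro h <;> nlinarith

/-- For positive integers `I, K, R` and `m := R − I + 2`, the bound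
`2 ≤ K ≤ I ≤ R` with `R ≤ (K + 3I − 1 − √((K−I)² + 2K + 6I − 3))/2` is equivalent to
`m − 1 ≤ K ≤ I ≤ R` with `R ≤ (I + 1 − m)(K + 1 − m)`. -/
theorem statement11 (I K R : ℕ) (hI : 0 < I) (hK : 0 < K) (hR : 0 < R)
    (m : ℤ) (hm : m = (R : ℤ) - (I : ℤ) + 2) :
    ((2 ≤ K ∧ K ≤ I ∧ I ≤ R) ∧
      (R : ℝ) ≤ ((K : ℝ) + 3 * (I : ℝ) - 1 -
        Real.sqrt (((K : ℝ) - (I : ℝ)) ^ 2 + 2 * (K : ℝ) + 6 * (I : ℝ) - 3)) / 2) ↔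
    ((m - 1 ≤ (K : ℤ) ∧ K ≤ I ∧ I ≤ R) ∧
      (R : ℤ) ≤ ((I : ℤ) + 1 - m) * ((K : ℤ) + 1 - m)) := by
  subst hm
  rw [sqrt_bound_iff]
  have hA : (I : ℤ) + 1 - ((R : ℤ) - I + 2) = 2 * (I : ℤ) - 1 - R := by ring
  have hB : (K : ℤ) + 1 - ((R : ℤ) - I + 2) = (K : ℤ) + I - 1 - R := by ring
  rw [hA, hB]
  constructor
  · rintro ⟨⟨-, hKI, hIR⟩, hsum, hprod⟩
    refine ⟨⟨?_, hKI, hIR⟩, hprod⟩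
    by_contra hneg
    have hB0 : (K : ℤ) + I - 1 - R < 0 := by omega
    -- With `B < 0`, positivity of `A B` needs `A < 0`, against `A + B + 1 ≥ 0`.
    have hA0 : 0 ≤ 2 * (I : ℤ) - 1 - R := by omega
    have := mul_nonpos_of_nonneg_of_nonpos hA0 hB0.le
    omega
  · rintro ⟨⟨hmK, hKI, hIR⟩, hprod⟩
    refine ⟨⟨?_, hKI, hIR⟩, by omega, hprod⟩
    by_contra hK2
    have hB0 : (K : ℤ) + I - 1 - R = 0 := by omega
    rw [hB0, mul_zero] at hprod
    omega
end

section
/- Let n be a positive integer and let W = {(A,B) ∈ ℂ^{n×n} × ℂ^{n×n} : A and B have a common eigenvalue, i.e., there exist λ ∈ ℂ and nonzero vectors f, g ∈ ℂ^n with A f = λ f and B g = λ g}. Then W has Lebesgue measure zero in ℂ^{n×n} × ℂ^{n×n} (identified with ℝ^{4n²}). -/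
/-!
If `A f = λ f` and `B g = λ g` with `f, g ≠ 0`, then `f ⊗ g` is a nonzero vector in the kernel of
the Sylvester matrix `A ⊗ 1 - 1 ⊗ B`, so the pair `(A, B)` lies in the closed set where
`det (A ⊗ 1 - 1 ⊗ B)` vanishes. Replacing `A` by `A + t • 1` adds `t • 1` to the Sylvester matrix,
hence on every complex line in the direction `(1, 0)` that determinant is a characteristic
polynomial in `t`, with finitely many zeros. A measurable set whose complement contains almost
every point of each translate of a fixed subspace is null, by Fubini.
-/

open MeasureTheory

open scoped Kronecker in
/-- The Sylvester matrix `A ⊗ 1 - 1 ⊗ B`, representing `X ↦ A X - X Bᵀ`. -/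
noncomputable def sylvester {n : ℕ} (A B : Matrix (Fin n) (Fin n) ℂ) :
    Matrix (Fin n × Fin n) (Fin n × Fin n) ℂ :=
  A ⊗ₖ (1 : Matrix (Fin n) (Fin n) ℂ) - (1 : Matrix (Fin n) (Fin n) ℂ) ⊗ₖ B

lemma det_sylvester_eq_zero {n : ℕ} {A B : Matrix (Fin n) (Fin n) ℂ} {lam : ℂ}
    {f g : Fin n → ℂ} (hf : f ≠ 0) (hg : g ≠ 0)
    (hA : A.mulVec f = lam • f) (hB : B.mulVec g = lam • g) :
    (sylvester A B).det = 0 := by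
  refine Matrix.exists_mulVec_eq_zero_iff.mp ⟨fun q => f q.1 * g q.2, ?_, ?_⟩
  · obtain ⟨i, hi⟩ := Function.ne_iff.mp hf
    obtain ⟨j, hj⟩ := Function.ne_iff.mp hg
    exact Function.ne_iff.mpr ⟨(i, j), mul_ne_zero hi hj⟩
  · ext ⟨i, j⟩
    have h1 : ∑ k, A i k * f k = lam * f i := congrFun hA i
    have h2 : ∑ k, B j k * g k = lam * g j := congrFun hB j
    have e1 : ∑ k, A i k * (f k * g j) = lam * f i * g j := by
      rw [← h1, Finset.sum_mul]
      exact Finset.sum_congr rfl fun k _ => by ring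
    have e2 : ∑ k, B j k * (f i * g k) = lam * f i * g j := by
      rw [mul_right_comm, ← h2, Finset.sum_mul]
      exact Finset.sum_congr rfl fun k _ => by ring
    simp [sylvester, Matrix.mulVec, dotProduct, Fintype.sum_prod_type, sub_mul,
      Matrix.one_apply, e1, e2]

lemma sylvester_add_smul_one {n : ℕ} (A B : Matrix (Fin n) (Fin n) ℂ) (t : ℂ) :
    sylvester (A + t • 1) B = Matrix.scalar _ t - (-sylvester A B) := by
  rw [sylvester, sylvester, Matrix.add_kronecker, Matrix.smul_kronecker, Matrix.one_kronecker_one,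
    Matrix.scalar_apply, ← Matrix.smul_one_eq_diagonal]
  abel

lemma finite_det_sylvester_eq_zero {n : ℕ} (A B : Matrix (Fin n) (Fin n) ℂ) :
    {t : ℂ | (sylvester (A + t • 1) B).det = 0}.Finite := by
  simp_rw [sylvester_add_smul_one, ← Matrix.eval_charpoly]
  exact Polynomial.finite_setOfPred_isRoot (Matrix.charpoly_monic _).ne_zero

/-- The set of pairs of `n×n` complex matrices having a common
eigenvalue has Lebesgue measure zero in `ℂ^{n×n} × ℂ^{n×n}`. -/
theorem statement12 (n : ℕ) (hn : 0 < n) :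
    volume {p : (Fin n → Fin n → ℂ) × (Fin n → Fin n → ℂ) |
      ∃ (lam : ℂ) (f g : Fin n → ℂ), f ≠ 0 ∧ g ≠ 0 ∧
        Matrix.mulVec p.1 f = lam • f ∧ Matrix.mulVec p.2 g = lam • g} = 0 := by
  let S : Set ((Fin n → Fin n → ℂ) × (Fin n → Fin n → ℂ)) :=
    {p | (sylvester (Matrix.of p.1) (Matrix.of p.2)).det ≠ 0}
  have hcont : Continuous fun p : (Fin n → Fin n → ℂ) × (Fin n → Fin n → ℂ) =>
      (sylvester (Matrix.of p.1) (Matrix.of p.2)).det := by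
    refine Continuous.matrix_det (continuous_matrix fun i j => ?_)
    simp only [sylvester, Matrix.sub_apply, Matrix.kroneckerMap_apply, Matrix.of_apply]
    fun_prop
  have hS : MeasurableSet S := (isOpen_ne_fun hcont continuous_const).measurableSet
  -- The direction `(1, 0)`, spanning a complex line seen as a real subspace.
  let L : ℂ →ₗ[ℝ] (Fin n → Fin n → ℂ) × (Fin n → Fin n → ℂ) :=
    { toFun := fun t => (fun i j => t * (1 : Matrix (Fin n) (Fin n) ℂ) i j, 0)
      map_add' := fun s t => by ext <;> simp [add_mul]
      map_smul' := fun s t => by ext <;> simp [mul_assoc] }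
  have hHaar : (volume : Measure (Fin n → Fin n → ℂ)).IsAddHaarMeasure := by
    have hrow : (volume : Measure (Fin n → ℂ)).IsAddHaarMeasure :=
      Measure.pi.isAddHaarMeasure fun _ => volume
    exact Measure.pi.isAddHaarMeasure fun _ => volume
  have hHaarProd :
      (volume : Measure ((Fin n → Fin n → ℂ) × (Fin n → Fin n → ℂ))).IsAddHaarMeasure :=
    Measure.prod.instIsAddHaarMeasure volume volume
  have hae : ∀ᵐ p, p ∈ S := by
    refine ae_mem_of_ae_add_linearMap_mem L volume volume hS fun p => ?_
    refine measure_mono_null (fun t ht => ?_)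
      ((finite_det_sylvester_eq_zero (Matrix.of p.1) (Matrix.of p.2)).measure_zero volume)
    have h := not_not.mp ht
    have hB : Matrix.of (p + L t).2 = Matrix.of p.2 := by ext; simp [L]
    rw [hB] at h
    exact h
  refine measure_mono_null ?_ hae
  rintro p ⟨lam, f, g, hf, hg, hA, hB⟩ hp
  exact hp (det_sylvester_eq_zero hf hg hA hB)
end

section
/- Let F = ℝ or ℂ, let m, I, J, R be positive integers with m ≤ I ≤ J, let A ∈ F^{I×R} satisfy k_A = I, let B ∈ F^{J×R} satisfy k_B = J, and let λ = (λ₁,…,λ_R) ∈ F^R. If rank(A·Diag(λ₁,…,λ_R)·Bᵀ) ≤ m − 1 and ω(λ₁,…,λ_R) ≥ m, then ω(λ₁,…,λ_R) ≥ I. -/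
/-!
Suppose `ω(λ) < I` and let `S` be the support of `λ`. Since `|S| < I ≤ J`, the columns of `A` and
of `B` indexed by `S` are linearly independent (`columns_linearIndependent_of_card_le_kRank`), so
the column submatrices `A_S` and `B_S` have left inverses `P` and `Q`. As
`A · Diag(λ) · Bᵀ = A_S · Diag(λ_S) · B_Sᵀ`, multiplying by `P` on the left and `Qᵀ` on the right
gives `Diag(λ_S)`, which has rank `|S| = ω(λ) ≥ m`. So `A · Diag(λ) · Bᵀ` has rank at least `m`,
a contradiction.
-/


noncomputable section

open scoped Matrix

/-- Any set of at most `k_A` columns is independent: the supremum defining the k-rank is attained,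
and independence passes to subsets. -/
theorem columns_linearIndependent_of_card_le_kRank {F : Type*} [Field F] {I R : ℕ}
    (A : Matrix (Fin I) (Fin R) F) (s : Finset (Fin R)) (hs : s.card ≤ kRank A) :
    LinearIndependent F (fun r : {x // x ∈ s} => fun i => A i r.1) := by
  have hmem : kRank A ∈ {k | k ≤ R ∧ ∀ s : Finset (Fin R), s.card = k →
      LinearIndependent F (fun r : {x // x ∈ s} => fun i => A i r.1)} := by
    refine Nat.sSup_mem ⟨0, Nat.zero_le _, fun s hs => ?_⟩ ⟨R, fun k hk => hk.1⟩
    obtain rfl := Finset.card_eq_zero.mp hs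
    exact linearIndependent_empty_type
  obtain ⟨t, hst, ht⟩ := Finset.exists_superset_card_eq hs (by simpa using hmem.1)
  exact (hmem.2 t ht).comp (fun r : {x // x ∈ s} => (⟨r.1, hst r.2⟩ : {x // x ∈ t}))
    (fun a b h => Subtype.ext (congrArg (fun x : {x // x ∈ t} => x.1) h))

theorem exists_leftInverse_submatrix_of_card_le_kRank {F : Type*} [Field F] {I R : ℕ}
    (A : Matrix (Fin I) (Fin R) F) (s : Finset (Fin R)) (hs : s.card ≤ kRank A) :
    ∃ P : Matrix {x // x ∈ s} (Fin I) F, P * A.submatrix id (fun r : {x // x ∈ s} => r.1) = 1 := by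
  have hinj : Function.Injective (A.submatrix id (fun r : {x // x ∈ s} => r.1)).mulVec :=
    Matrix.mulVec_injective_iff.mpr (columns_linearIndependent_of_card_le_kRank A s hs)
  obtain ⟨g, hg⟩ := (Matrix.toLin' (A.submatrix id (fun r : {x // x ∈ s} => r.1)))
    |>.exists_leftInverse_of_injective (LinearMap.ker_eq_bot.mpr hinj)
  refine ⟨LinearMap.toMatrix' g, Matrix.toLin'.injective ?_⟩
  rw [Matrix.toLin'_mul, Matrix.toLin'_toMatrix', hg, Matrix.toLin'_one]

/-- `A · Diag(λ) · Bᵀ` only depends on the columns in a set `s` containing the support of `λ`. -/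
theorem mul_diagonal_mul_transpose_eq_submatrix {F : Type*} [Field F] {I J R : ℕ}
    (A : Matrix (Fin I) (Fin R) F) (B : Matrix (Fin J) (Fin R) F) (lam : Fin R → F)
    (s : Finset (Fin R)) (hs : ∀ r, r ∉ s → lam r = 0) :
    A * Matrix.diagonal lam * Bᵀ =
      A.submatrix id (fun r : {x // x ∈ s} => r.1) *
        Matrix.diagonal (fun r : {x // x ∈ s} => lam r.1) *
        (B.submatrix id (fun r : {x // x ∈ s} => r.1))ᵀ := by
  ext i j
  simp only [Matrix.mul_apply (N := Bᵀ), Matrix.mul_apply (N := Matrix.transpose _),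
    Matrix.mul_diagonal, Matrix.transpose_apply, Matrix.submatrix_apply, id]
  rw [Finset.sum_coe_sort s (fun r => A i r * lam r * B j r)]
  exact (Finset.sum_subset (Finset.subset_univ s) (fun r _ hr => by simp [hs r hr])).symm

/-- If `m ≤ I ≤ J`, `k_A = I`, `k_B = J`,
`rank(A·Diag(λ)·Bᵀ) ≤ m − 1` and `ω(λ) ≥ m`, then `ω(λ) ≥ I`. -/
theorem statement14 {F : Type*} [RCLike F] {I J R : ℕ} (m : ℕ) (hm : 0 < m)
    (hmI : m ≤ I) (hIJ : I ≤ J)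
    (A : Matrix (Fin I) (Fin R) F) (B : Matrix (Fin J) (Fin R) F)
    (hA : kRank A = I) (hB : kRank B = J) (lam : Fin R → F)
    (hrank : (A * Matrix.diagonal lam * Bᵀ).rank ≤ m - 1)
    (homega : m ≤ omegaCount lam) :
    I ≤ omegaCount lam := by
  classical
  by_contra! hlt
  set s : Finset (Fin R) := Finset.univ.filter (fun r => lam r ≠ 0) with hs
  have hcard : omegaCount lam = s.card := by
    rw [omegaCount, Nat.card_eq_fintype_card, Fintype.card_subtype]
  obtain ⟨P, hP⟩ := exists_leftInverse_submatrix_of_card_le_kRank A s (by omega)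
  obtain ⟨Q, hQ⟩ := exists_leftInverse_submatrix_of_card_le_kRank B s (by omega)
  have hdiag : P * (A * Matrix.diagonal lam * Bᵀ) * Qᵀ =
      Matrix.diagonal (fun r : {x // x ∈ s} => lam r.1) := by
    rw [mul_diagonal_mul_transpose_eq_submatrix A B lam s (by simp [hs])]
    simp only [Matrix.mul_assoc]
    rw [← Matrix.transpose_mul, hQ, ← Matrix.mul_assoc, hP]
    simp
  have hle : (Matrix.diagonal (fun r : {x // x ∈ s} => lam r.1)).rank ≤ m - 1 := by
    rw [← hdiag]
    exact (Matrix.rank_mul_le_left _ _).trans ((Matrix.rank_mul_le_right _ _).trans hrank)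
  have hunit : IsUnit (Matrix.diagonal (fun r : {x // x ∈ s} => lam r.1)) := by
    rw [Matrix.isUnit_diagonal, Pi.isUnit_iff]
    exact fun r => (Finset.mem_filter.mp r.2).2.isUnit
  rw [Matrix.rank_of_isUnit _ hunit, Fintype.card_coe] at hle
  omega
end
end

section
/- Let F = ℝ or ℂ, let m, R be integers with 2 ≤ m ≤ R, and let A ∈ F^{I×R}, B ∈ F^{J×R}. If condition (U_m) holds for the pair (A,B), then the Khatri–Rao product A⊙B has full column rank (rank R). -/
/-!
If `A ⊙ B` were column-rank deficient, some `lam ≠ 0` would satisfy `A * diag lam * Bᵀ = 0`.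
Condition `(U_m)` forces `1 ≤ ω(lam) ≤ m - 1`. Setting `m - ω(lam)` of the zero entries of `lam`
to `1` produces a vector with exactly `m` nonzero entries, while the associated matrix is the sum
of only `m - ω(lam) ≤ m - 1` rank-one terms; this contradicts `(U_m)`.
-/

noncomputable section

open scoped Matrix

lemma omegaCount_eq_card {F : Type*} [Zero F] [DecidableEq F] {R : ℕ} (lam : Fin R → F) :
    omegaCount lam = (Finset.univ.filter fun r => lam r ≠ 0).card := by
  rw [omegaCount, Nat.card_eq_fintype_card, Fintype.card_subtype]

/-- A kernel vector of `A ⊙ B` is a vanishing combination of the rank-one matrices `a_r b_rᵀ`. -/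
lemma mul_diagonal_mul_transpose_eq_zero {F : Type*} [Field F] {I J R : ℕ}
    (A : Matrix (Fin I) (Fin R) F) (B : Matrix (Fin J) (Fin R) F) (lam : Fin R → F)
    (h0 : (khatriRao A B).mulVec lam = 0) : A * Matrix.diagonal lam * Bᵀ = 0 := by
  ext i j
  have := congrFun h0 (i, j)
  simp only [Matrix.mulVec, dotProduct, khatriRao, Pi.zero_apply] at this
  rw [Matrix.mul_apply, Matrix.zero_apply, ← this]
  refine Finset.sum_congr rfl fun r _ => ?_
  rw [Matrix.mul_diagonal, Matrix.transpose_apply]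
  ring

/-- Condition `(U_m)` makes the kernel of `A ⊙ B` trivial. -/
lemma CondU.eq_zero_of_mulVec_eq_zero {F : Type*} [Field F] {I J R : ℕ} {m : ℕ}
    (hm : 2 ≤ m) (hmR : m ≤ R)
    {A : Matrix (Fin I) (Fin R) F} {B : Matrix (Fin J) (Fin R) F}
    (h : CondU m A B) (lam : Fin R → F) (h0 : (khatriRao A B).mulVec lam = 0) : lam = 0 := by
  classical
  have hz := mul_diagonal_mul_transpose_eq_zero A B lam h0
  have hle := h lam (by rw [hz, Matrix.rank_zero]; exact Nat.zero_le _)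
  rw [omegaCount_eq_card] at hle
  by_contra hne
  obtain ⟨r₀, hr₀⟩ := Function.ne_iff.mp hne
  set S := Finset.univ.filter fun r => lam r ≠ 0 with hS
  have hpos : 0 < S.card := Finset.card_pos.mpr ⟨r₀, by simpa [hS] using hr₀⟩
  -- `T` is the set of zero entries of `lam` that get replaced by `1`.
  obtain ⟨T, hTS, hT⟩ : ∃ T ⊆ Sᶜ, T.card = m - S.card := by
    apply Finset.exists_subset_card_eq
    rw [Finset.card_compl, Fintype.card_fin]
    omega
  have hdisj : Disjoint S T :=
    (Finset.subset_compl_iff_disjoint_left).mp hTS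
  let ind : Fin R → F := fun r => if r ∈ T then 1 else 0
  have hrank : (A * Matrix.diagonal (lam + ind) * Bᵀ).rank ≤ m - 1 := by
    have hsum : A * Matrix.diagonal (lam + ind) * Bᵀ = A * Matrix.diagonal ind * Bᵀ := by
      rw [← zero_add (A * Matrix.diagonal ind * Bᵀ), ← hz, ← Matrix.add_mul, ← Matrix.mul_add,
        Matrix.diagonal_add]
      rfl
    have hind : (Matrix.diagonal ind).rank = T.card := by
      rw [Matrix.rank_diagonal, Fintype.card_subtype]
      congr 1
      ext r
      simp [ind]
    rw [hsum]
    calc (A * Matrix.diagonal ind * Bᵀ).rank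
        ≤ (A * Matrix.diagonal ind).rank := Matrix.rank_mul_le_left _ _
      _ ≤ (Matrix.diagonal ind).rank := Matrix.rank_mul_le_right _ _
      _ ≤ m - 1 := by omega
  have hcard := h _ hrank
  have hsupp : (Finset.univ.filter fun r => (lam + ind) r ≠ 0) = S ∪ T := by
    ext r
    by_cases hrT : r ∈ T
    · have : lam r = 0 := by simpa [hS] using hTS hrT
      simp [ind, hrT, this]
    · simp [ind, hrT, hS]
  rw [omegaCount_eq_card, hsupp, Finset.card_union_of_disjoint hdisj] at hcard
  omega

/-- If `2 ≤ m ≤ R` and condition `(U_m)` holds for `(A,B)`, then the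
Khatri–Rao product `A ⊙ B` has full column rank `R`. -/
theorem statement16 {F : Type*} [RCLike F] {I J R : ℕ} (m : ℕ) (hm : 2 ≤ m) (hmR : m ≤ R)
    (A : Matrix (Fin I) (Fin R) F) (B : Matrix (Fin J) (Fin R) F)
    (h : CondU m A B) : (khatriRao A B).rank = R := by
  have hinj : Function.Injective (khatriRao A B).mulVecLin :=
    (injective_iff_map_eq_zero _).mpr fun lam h0 =>
      h.eq_zero_of_mulVec_eq_zero hm hmR lam (by simpa using h0)
  rw [Matrix.rank, LinearMap.finrank_range_of_inj hinj, Module.finrank_fin_fun]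
end
end

section
/- Let I, J be integers with 4 ≤ I ≤ J, let K = (I−2)(J−2), and let R = (I−2)(J−2) + 1. Then, for F = ℝ and for F = ℂ, the CPD of an I×J×K tensor of rank R is generically unique. -/
/-!
Write `K = (I-2)(J-2)` and `R = K+1`. For almost every `(A, B, C)` two properties hold.

* Every maximal minor of `A`, `B` and `C` is nonzero (`maxMinors_ae`).
* If a combination `Σ_k g_k T_k = Σ_r f_r a_r b_rᵀ`, `f = Cᵀ g`, of the frontal slices has rank at
  most two, then `f` has at most two nonzero entries (`rank_two_slices`).

The second property fails on a null set for dimension reasons. A combination of at most `I` terms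
with nonzero coefficients is handled by `small_support`. If more than `I` coefficients are nonzero,
then modulo the span of two coordinate rows of `A` the relation becomes `Σ_r f_r n_r b_rᵀ = 0` with
`n_r ∈ F^(I-2)`, and `I-2` of the columns `n_r` with `f_r ≠ 0` form a basis, so the corresponding
`I-2` columns of `B` are determined by the remaining ones. Solving the relations exhibits `(A, B, C)`
as a value of one of finitely many polynomial maps `badMap` (`large_support`), whose source has one
dimension over `F` less than the space of all `(A, B, C)`; a differentiable image of a space of
smaller dimension is null (`range_null`).

Uniqueness then follows from the deterministic statement `cpd_rigid`, in the spirit of Kruskal's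
permutation lemma. The coefficient vectors `Cᵀ g` form a hyperplane of `F^R` in which all nonzero
vectors have at least two nonzero entries. A second decomposition with `R' ≤ R` terms must also have
`R` terms and yields a hyperplane with the same property, so for any two of its indices `s ≠ t` there
is a `g = G s t` whose slice combination involves only the terms `s` and `t` of the second
decomposition. That combination has rank at most two, hence involves exactly two terms of the first
one. The resulting two-element sets `X (G s t)` meet and differ for different `t`, so they all share
one element `σ s`; then `X (G s t) = {σ s, σ t}`, and comparing rank-two matrices for varying `t`
gives proportionality of the factors of the terms `s` and `σ s`.
-/

open MeasureTheory

noncomputable section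

/-! ### Null sets: images of smaller spaces and determinants -/

/-- A differentiable map into a space of larger dimension has null range. The source is embedded as
a proper subspace of the target, which is null, and differentiable maps preserve null sets. -/
theorem range_null {E₁ E₂ : Type*} [NormedAddCommGroup E₁] [NormedSpace ℝ E₁]
    [FiniteDimensional ℝ E₁] [NormedAddCommGroup E₂] [NormedSpace ℝ E₂] [FiniteDimensional ℝ E₂]
    [MeasurableSpace E₂] [BorelSpace E₂] (μ : Measure E₂) [μ.IsAddHaarMeasure]
    (hlt : Module.finrank ℝ E₁ < Module.finrank ℝ E₂) (Ψ : E₁ → E₂) (hΨ : Differentiable ℝ Ψ) :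
    μ (Set.range Ψ) = 0 := by
  obtain ⟨i, hi⟩ : ∃ i : E₁ →ₗ[ℝ] E₂, Function.Injective i :=
    Module.Free.exists_linearMap_injective_of_lift_rank_lt (by
      rw [← Module.finrank_eq_rank, ← Module.finrank_eq_rank, Cardinal.lift_natCast,
        Cardinal.lift_natCast]
      exact_mod_cast hlt)
  obtain ⟨L, hL⟩ := i.exists_leftInverse_of_injective (LinearMap.ker_eq_bot.2 hi)
  have hL' : ∀ x, L (i x) = x := fun x => LinearMap.congr_fun hL x
  have hne : LinearMap.range i ≠ ⊤ := by
    intro h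
    have h1 := LinearMap.finrank_range_of_inj hi
    rw [h, finrank_top] at h1
    omega
  have h0 := Measure.addHaar_submodule μ _ hne
  have hd : Differentiable ℝ (fun x => Ψ (L x)) :=
    hΨ.comp (LinearMap.toContinuousLinearMap L).differentiable
  have := addHaar_image_eq_zero_of_differentiableOn_of_addHaar_eq_zero μ
    (s := (LinearMap.range i : Set E₂)) hd.differentiableOn h0
  refine measure_mono_null ?_ this
  rintro _ ⟨x, rfl⟩
  exact ⟨i x, ⟨x, rfl⟩, by simp [hL']⟩

open Classical in
/-- Parametrises the matrices whose columns `e` are linearly dependent through a relation between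
rows in which row `i₀` has coefficient one: `q.1` holds the other rows, `q.2.1` the coefficients of
the relation, `q.2.2` the entries of row `i₀` outside the columns `e`. -/
def detMap (F : Type*) [RCLike F] {m R : ℕ} (i₀ : Fin (m + 1)) (e : Fin (m + 1) → Fin R)
    (q : (Fin m → Fin R → F) × (Fin m → F) × ({r // r ∉ Set.range e} → F)) :
    Fin (m + 1) → Fin R → F :=
  fun i r => i₀.insertNth (α := fun _ => F)
    (if h : r ∉ Set.range e then q.2.2 ⟨r, h⟩ else - ∑ l, q.2.1 l * q.1 l r)
    (fun l => q.1 l r) i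

theorem det_ae (F : Type*) [RCLike F] [MeasureSpace F] [BorelSpace F]
    [(volume : Measure F).IsAddHaarMeasure] {n R : ℕ} (e : Fin n → Fin R)
    (he : Function.Injective e) :
    ∀ᵐ A : Fin n → Fin R → F, (Matrix.of fun i j => A i (e j)).det ≠ 0 := by
  classical
  obtain _ | m := n
  · simp
  have hnull : ∀ i₀ : Fin (m + 1), ∀ᵐ A : Fin (m + 1) → Fin R → F,
      A ∉ Set.range (detMap F i₀ e) := by
    intro i₀
    rw [ae_iff]
    simp only [not_not, Set.ofPred_mem_eq]
    have : (volume : Measure (Fin (m + 1) → Fin R → F)).IsAddHaarMeasure := by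
      apply Measure.pi.isAddHaarMeasure
    refine range_null _ ?_ _ ?_
    · have hc : Fintype.card {r // r ∉ Set.range e} + (m + 1) = R := by
        have h1 := Fintype.card_subtype_compl (fun r => r ∈ Set.range e)
        have h2 : Fintype.card {r // r ∈ Set.range e} = m + 1 := by
          refine Eq.trans ?_ (Fintype.card_fin (m + 1))
          exact Fintype.card_congr (Equiv.ofInjective e he).symm
        have h3 := Fintype.card_subtype_le (fun r => r ∈ Set.range e)
        simp only [Fintype.card_fin] at h1 h3
        omega
      simp only [Module.finrank_prod, Module.finrank_pi_fintype, Finset.sum_const, Finset.card_univ,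
        Fintype.card_fin, smul_eq_mul]
      have hF : 0 < Module.finrank ℝ F := Module.finrank_pos
      generalize Fintype.card {r // r ∉ Set.range e} = q at *
      subst hc
      nlinarith
    · rw [differentiable_pi]; intro i
      rw [differentiable_pi]; intro r
      unfold detMap
      refine Fin.succAboveCases i₀ ?_ (fun l => ?_) i
      · simp only [Fin.insertNth_apply_same]
        by_cases h : r ∈ Set.range e <;>
          simp only [h, not_true_eq_false, not_false_eq_true, dite_true, dite_false] <;> fun_prop
      · simp only [Fin.insertNth_apply_succAbove]
        fun_prop
  have := ae_all_iff.2 hnull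
  filter_upwards [this] with A hA hdet
  obtain ⟨v, hv, hvA⟩ := Matrix.exists_vecMul_eq_zero_iff.2 hdet
  obtain ⟨i₀, hi₀⟩ := Function.ne_iff.1 hv
  simp only [Pi.zero_apply] at hi₀
  refine hA i₀ ⟨(fun l => A (i₀.succAbove l), fun l => v (i₀.succAbove l) / v i₀,
    fun r => A i₀ r), ?_⟩
  funext i r
  unfold detMap
  refine Fin.succAboveCases i₀ ?_ (fun l => ?_) i
  · simp only [Fin.insertNth_apply_same]
    by_cases h : r ∈ Set.range e
    · simp only [h, not_true_eq_false, dite_false]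
      obtain ⟨j, rfl⟩ := h
      have h1 := congrFun hvA j
      simp only [Matrix.vecMul, dotProduct, Matrix.of_apply, Pi.zero_apply] at h1
      rw [Fin.sum_univ_succAbove _ i₀] at h1
      have h2 : ∑ l, v (i₀.succAbove l) / v i₀ * A (i₀.succAbove l) (e j)
          = (∑ l, v (i₀.succAbove l) * A (i₀.succAbove l) (e j)) / v i₀ := by
        rw [Finset.sum_div]; exact Finset.sum_congr rfl fun _ _ => by ring
      rw [h2]
      field_simp
      linear_combination -h1
    · simp only [h, not_false_eq_true, dite_true]
  · simp only [Fin.insertNth_apply_succAbove]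

/-! ### Rank-two matrices and intersecting pairs -/

/-- Independent vectors `b₁, b₂` are separated by a functional. -/
theorem exists_dual_pair {F : Type*} [Field F] {J : ℕ} {b₁ b₂ : Fin J → F}
    (h : ∀ x y : F, (∀ j, x * b₁ j + y * b₂ j = 0) → x = 0 ∧ y = 0) :
    ∃ d : Fin J → F, ∑ j, b₁ j * d j = 1 ∧ ∑ j, b₂ j * d j = 0 := by
  obtain ⟨j₁, h₁⟩ : ∃ j, b₂ j ≠ 0 := by
    by_contra! hc
    exact one_ne_zero (h 0 1 (by simp [hc])).2
  obtain ⟨j₂, h₂⟩ : ∃ j, b₁ j * b₂ j₁ - b₁ j₁ * b₂ j ≠ 0 := by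
    by_contra! hc
    exact h₁ (h (b₂ j₁) (- b₁ j₁) (fun j => by linear_combination hc j)).1
  refine ⟨fun j => ((Pi.single j₂ (b₂ j₁) : Fin J → F) j - (Pi.single j₁ (b₂ j₂) : Fin J → F) j) /
    (b₁ j₂ * b₂ j₁ - b₁ j₁ * b₂ j₂), ?_, ?_⟩
  · simp only [mul_div_assoc', ← Finset.sum_div, mul_sub, Finset.sum_sub_distrib,
      Pi.single_apply, mul_ite, mul_zero, Finset.sum_ite_eq', Finset.mem_univ, if_true]
    exact div_self h₂
  · simp only [mul_div_assoc', ← Finset.sum_div, mul_sub, Finset.sum_sub_distrib,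
      Pi.single_apply, mul_ite, mul_zero, Finset.sum_ite_eq', Finset.mem_univ, if_true]
    rw [mul_comm, sub_self, zero_div]

/-- If `x a₁ b₁ᵀ + y a₂ b₂ᵀ = u₁ v₁ᵀ + u₂ v₂ᵀ` with `b₁, b₂` independent, the column space of the left
side contains `a₁, a₂`, so both lie in the span of `u₁, u₂`. -/
theorem cols_of_rank_two {F : Type*} [Field F] {I J : ℕ} {a₁ a₂ u₁ u₂ : Fin I → F}
    {b₁ b₂ v₁ v₂ : Fin J → F} {x y : F} (hx : x ≠ 0) (hy : y ≠ 0)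
    (hb : ∀ x y : F, (∀ j, x * b₁ j + y * b₂ j = 0) → x = 0 ∧ y = 0)
    (h : ∀ i j, x * a₁ i * b₁ j + y * a₂ i * b₂ j = u₁ i * v₁ j + u₂ i * v₂ j) :
    ∃ α β γ δ : F, (∀ i, a₁ i = α * u₁ i + β * u₂ i) ∧ (∀ i, a₂ i = γ * u₁ i + δ * u₂ i) := by
  obtain ⟨d, hd1, hd2⟩ := exists_dual_pair hb
  obtain ⟨d', hd1', hd2'⟩ := exists_dual_pair (b₁ := b₂) (b₂ := b₁)
    (fun x y hxy => (hb y x (fun j => by rw [add_comm]; exact hxy j)).symm)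
  have key : ∀ (d : Fin J → F) i, x * a₁ i * ∑ j, b₁ j * d j + y * a₂ i * ∑ j, b₂ j * d j
      = u₁ i * ∑ j, v₁ j * d j + u₂ i * ∑ j, v₂ j * d j := by
    intro d i
    simp only [Finset.mul_sum, ← Finset.sum_add_distrib]
    exact Finset.sum_congr rfl fun j _ => by linear_combination d j * h i j
  refine ⟨(∑ j, v₁ j * d j) / x, (∑ j, v₂ j * d j) / x, (∑ j, v₁ j * d' j) / y,
    (∑ j, v₂ j * d' j) / y, fun i => ?_, fun i => ?_⟩
  · have := key d i
    rw [hd1, hd2] at this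
    field_simp
    linear_combination this
  · have := key d' i
    rw [hd1', hd2'] at this
    field_simp
    linear_combination this

theorem not_rank_one {F : Type*} [Field F] {I J : ℕ} {a₁ a₂ u : Fin I → F}
    {b₁ b₂ v : Fin J → F} {x y : F} (hx : x ≠ 0) (hy : y ≠ 0)
    (ha : ∀ x y : F, (∀ j, x * a₁ j + y * a₂ j = 0) → x = 0 ∧ y = 0)
    (hb : ∀ x y : F, (∀ j, x * b₁ j + y * b₂ j = 0) → x = 0 ∧ y = 0)
    (h : ∀ i j, x * a₁ i * b₁ j + y * a₂ i * b₂ j = u i * v j) : False := by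
  obtain ⟨α, β, γ, δ, h1, h2⟩ := cols_of_rank_two (u₁ := u) (u₂ := 0) (v₁ := v) (v₂ := 0) hx hy hb
    (fun i j => by simpa using h i j)
  simp only [Pi.zero_apply, mul_zero, add_zero] at h1 h2
  have := ha γ (-α) (fun i => by rw [h1, h2]; ring)
  have hα : α = 0 := by simpa using this.2
  have := ha 1 0 (fun i => by rw [h1, hα]; ring)
  exact one_ne_zero this.1

/-- Comparing dimensions of column spaces, the inclusion of `cols_of_rank_two` is an equality. -/
theorem mem_span_of_rank_two {F : Type*} [Field F] {I J : ℕ} {a₁ a₂ u₁ u₂ : Fin I → F}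
    {b₁ b₂ v₁ v₂ : Fin J → F} {x y : F} (hx : x ≠ 0) (hy : y ≠ 0)
    (ha : ∀ x y : F, (∀ j, x * a₁ j + y * a₂ j = 0) → x = 0 ∧ y = 0)
    (hb : ∀ x y : F, (∀ j, x * b₁ j + y * b₂ j = 0) → x = 0 ∧ y = 0)
    (h : ∀ i j, x * a₁ i * b₁ j + y * a₂ i * b₂ j = u₁ i * v₁ j + u₂ i * v₂ j) :
    ∃ p q : F, ∀ i, u₁ i = p * a₁ i + q * a₂ i := by
  obtain ⟨α, β, γ, δ, h1, h2⟩ := cols_of_rank_two hx hy hb h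
  by_cases hD : α * δ - β * γ = 0
  · have e1 := ha δ (-β) (fun i => by rw [h1, h2]; linear_combination u₁ i * hD)
    have e2 := ha γ (-α) (fun i => by rw [h1, h2]; linear_combination - u₂ i * hD)
    have hα : α = 0 := by simpa using e2.2
    have hβ : β = 0 := by simpa using e1.2
    exact absurd (ha 1 0 (fun i => by rw [h1, hα, hβ]; ring)).1 one_ne_zero
  · refine ⟨δ / (α * δ - β * γ), -β / (α * δ - β * γ), fun i => ?_⟩
    rw [h1, h2, div_mul_eq_mul_div, div_mul_eq_mul_div, ← add_div, eq_div_iff hD]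
    ring

/-- At least four distinct, pairwise intersecting two-element sets have a common element; three of
them could also form a triangle. -/
theorem star_of_pairwise_meet {ι α : Type*} [DecidableEq ι] [DecidableEq α] (N : Finset ι)
    (hN : 4 ≤ N.card) (X : ι → Finset α) (h2 : ∀ i ∈ N, (X i).card = 2)
    (hX : ∀ i ∈ N, ∀ j ∈ N, i ≠ j → X i ≠ X j ∧ ¬ Disjoint (X i) (X j)) :
    ∃ r, ∀ i ∈ N, r ∈ X i := by
  obtain ⟨i₁, m1, i₂, m2, h12⟩ := Finset.one_lt_card.1 (show 1 < N.card by omega)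
  obtain ⟨r, hr1, hr2⟩ := Finset.not_disjoint_iff.1 (hX _ m1 _ m2 h12).2
  refine ⟨r, ?_⟩
  by_contra! hc
  obtain ⟨i₃, m3, hr3⟩ := hc
  have h4 : ∃ i₄ ∈ N, i₄ ∉ ({i₁, i₂, i₃} : Finset ι) := by
    by_contra! hc
    have := Finset.card_le_card (show N ⊆ {i₁, i₂, i₃} from hc)
    have := Finset.card_le_three (a := i₁) (b := i₂) (c := i₃)
    omega
  obtain ⟨i₄, m4, hi4⟩ := h4
  simp only [Finset.mem_insert, Finset.mem_singleton, not_or] at hi4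
  have h13 : i₁ ≠ i₃ := by rintro rfl; exact hr3 hr1
  have h23 : i₂ ≠ i₃ := by rintro rfl; exact hr3 hr2
  have other : ∀ i ∈ N, ∀ r ∈ X i, ∃ x, x ≠ r ∧ X i = {r, x} := by
    intro i hi r hr
    obtain ⟨p, q, hpq, he⟩ := Finset.card_eq_two.1 (h2 i hi)
    rw [he] at hr ⊢
    rcases Finset.mem_insert.1 hr with rfl | hr
    · exact ⟨q, hpq.symm, rfl⟩
    · rw [Finset.mem_singleton] at hr
      subst hr
      exact ⟨p, hpq, Finset.pair_comm _ _⟩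
  obtain ⟨x, hx, ex⟩ := other _ m1 r hr1
  obtain ⟨y, hy, ey⟩ := other _ m2 r hr2
  have hxy : x ≠ y := by rintro rfl; exact (hX _ m1 _ m2 h12).1 (ex.trans ey.symm)
  have meet : ∀ i ∈ N, ∀ j ∈ N, i ≠ j → ∀ p q, X j = {p, q} → p ∈ X i ∨ q ∈ X i := by
    intro i hi j hj hij p q he
    obtain ⟨z, hz, hz'⟩ := Finset.not_disjoint_iff.1 (hX _ hi _ hj hij).2
    rw [he] at hz'
    rcases Finset.mem_insert.1 hz' with rfl | h
    · exact Or.inl hz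
    · rw [Finset.mem_singleton] at h; subst h; exact Or.inr hz
  have hx3 : x ∈ X i₃ := (meet _ m3 _ m1 h13.symm _ _ ex).resolve_left hr3
  have hy3 : y ∈ X i₃ := (meet _ m3 _ m2 h23.symm _ _ ey).resolve_left hr3
  have two : ∀ i ∈ N, ∀ p q, p ≠ q → p ∈ X i → q ∈ X i → X i = {p, q} := by
    intro i hi p q hpq hp hq
    refine (Finset.eq_of_subset_of_card_le ?_ ?_).symm
    · intro z hz
      rcases Finset.mem_insert.1 hz with rfl | h
      · exact hp
      · rw [Finset.mem_singleton] at h; subst h; exact hq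
    · rw [h2 i hi, Finset.card_pair hpq]
  have e3 := two _ m3 _ _ hxy hx3 hy3
  have q1 := meet _ m4 _ m1 hi4.1 _ _ ex
  have q2 := meet _ m4 _ m2 hi4.2.1 _ _ ey
  have q3 := meet _ m4 _ m3 hi4.2.2 _ _ e3
  have k1 : ¬ (r ∈ X i₄ ∧ x ∈ X i₄) := fun h =>
    (hX _ m4 _ m1 hi4.1).1 ((two _ m4 _ _ hx.symm h.1 h.2).trans ex.symm)
  have k2 : ¬ (r ∈ X i₄ ∧ y ∈ X i₄) := fun h =>
    (hX _ m4 _ m2 hi4.2.1).1 ((two _ m4 _ _ hy.symm h.1 h.2).trans ey.symm)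
  have k3 : ¬ (x ∈ X i₄ ∧ y ∈ X i₄) := fun h =>
    (hX _ m4 _ m3 hi4.2.2).1 ((two _ m4 _ _ hxy h.1 h.2).trans e3.symm)
  tauto

/-! ### Rigidity of decompositions -/

/-- Deterministic uniqueness: under `hA`, `hB` (any three columns independent), `hC` (any `K` columns
of `C` span `F^K`) and `hG` (slice combinations of rank at most two involve at most two terms), every
decomposition of `[A, B, C]` with at most `K + 1` terms is a permutation of the given one. -/
theorem cpd_rigid {F : Type*} [Field F] {I J K R' : ℕ} (hK : 4 ≤ K)
    (A : Fin I → Fin (K + 1) → F) (B : Fin J → Fin (K + 1) → F) (C : Fin K → Fin (K + 1) → F)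
    (hA : ∀ r s t, r ≠ s → r ≠ t → s ≠ t → ∀ x y z : F,
      (∀ i, x * A i r + y * A i s + z * A i t = 0) → x = 0 ∧ y = 0 ∧ z = 0)
    (hB : ∀ r s t, r ≠ s → r ≠ t → s ≠ t → ∀ x y z : F,
      (∀ i, x * B i r + y * B i s + z * B i t = 0) → x = 0 ∧ y = 0 ∧ z = 0)
    (hC : ∀ r₀ (g : Fin K → F), (∀ r ≠ r₀, ∑ k, C k r * g k = 0) → g = 0)
    (hG : ∀ (g : Fin K → F) (u₁ u₂ : Fin I → F) (v₁ v₂ : Fin J → F),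
      (∀ i j, ∑ r, (∑ k, C k r * g k) * A i r * B j r = u₁ i * v₁ j + u₂ i * v₂ j) →
      ∃ S : Finset (Fin (K + 1)), S.card ≤ 2 ∧ ∀ r ∉ S, ∑ k, C k r * g k = 0)
    (hR' : R' ≤ K + 1) (a' : Fin R' → Fin I → F) (b' : Fin R' → Fin J → F) (c' : Fin R' → Fin K → F)
    (h : ∀ i j k, ∑ r, A i r * B j r * C k r = ∑ s, a' s i * b' s j * c' s k) :
    ∃ e : Fin R' ≃ Fin (K + 1), ∀ s i j k,
      a' s i * b' s j * c' s k = A i (e s) * B j (e s) * C k (e s) := by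
  classical
  -- `φ` and `φ'` give the coefficients of a slice combination in the two decompositions.
  let φ : (Fin K → F) →ₗ[F] (Fin (K + 1) → F) := Matrix.mulVecLin (Matrix.of fun r k => C k r)
  let φ' : (Fin K → F) →ₗ[F] (Fin R' → F) := Matrix.mulVecLin (Matrix.of fun s k => c' s k)
  have hφ : ∀ g r, φ g r = ∑ k, C k r * g k := fun g r => rfl
  have hφ' : ∀ g s, φ' g s = ∑ k, c' s k * g k := fun g r => rfl
  have third : ∀ r s : Fin (K + 1), ∃ t, r ≠ t ∧ s ≠ t := by
    intro r s
    obtain ⟨t, ht⟩ := Finset.exists_mem_notMem_of_card_lt_card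
      (s := ({r, s} : Finset (Fin (K + 1)))) (t := Finset.univ)
      (lt_of_le_of_lt Finset.card_le_two (by simp; omega))
    simp only [Finset.mem_univ, Finset.mem_insert, Finset.mem_singleton, not_or, true_and] at ht
    exact ⟨t, Ne.symm ht.1, Ne.symm ht.2⟩
  have hA2 : ∀ r s, r ≠ s → ∀ x y : F, (∀ i, x * A i r + y * A i s = 0) → x = 0 ∧ y = 0 := by
    intro r s hrs x y hxy
    obtain ⟨t, h1, h2⟩ := third r s
    have := hA r s t hrs h1 h2 x y 0 (by simpa using hxy)
    exact ⟨this.1, this.2.1⟩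
  have hB2 : ∀ r s, r ≠ s → ∀ x y : F, (∀ i, x * B i r + y * B i s = 0) → x = 0 ∧ y = 0 := by
    intro r s hrs x y hxy
    obtain ⟨t, h1, h2⟩ := third r s
    have := hB r s t hrs h1 h2 x y 0 (by simpa using hxy)
    exact ⟨this.1, this.2.1⟩
  have slice : ∀ g i j, ∑ r, φ g r * A i r * B j r = ∑ s, φ' g s * a' s i * b' s j := by
    intro g i j
    have e1 : ∑ r, φ g r * A i r * B j r = ∑ k, g k * ∑ r, A i r * B j r * C k r := by
      simp only [hφ, Finset.mul_sum, Finset.sum_mul]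
      rw [Finset.sum_comm]
      exact Finset.sum_congr rfl fun k _ => Finset.sum_congr rfl fun r _ => by ring
    have e2 : ∑ s, φ' g s * a' s i * b' s j = ∑ k, g k * ∑ s, a' s i * b' s j * c' s k := by
      simp only [hφ', Finset.mul_sum, Finset.sum_mul]
      rw [Finset.sum_comm]
      exact Finset.sum_congr rfl fun k _ => Finset.sum_congr rfl fun r _ => by ring
    rw [e1, e2]
    exact Finset.sum_congr rfl fun k _ => by rw [h]
  -- The support of `φ g`.
  let X : (Fin K → F) → Finset (Fin (K + 1)) := fun g => Finset.univ.filter fun r => φ g r ≠ 0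
  have memX : ∀ g r, r ∈ X g ↔ φ g r ≠ 0 := fun g r => by simp [X]
  have cardX : ∀ g, g ≠ 0 → 2 ≤ (X g).card := by
    intro g hg
    by_contra hlt
    have : (X g).card ≤ 1 := by omega
    have : ∃ r₀, ∀ r ∈ X g, r = r₀ := by
      rcases Nat.le_one_iff_eq_zero_or_eq_one.1 this with h0 | h1
      · rw [Finset.card_eq_zero] at h0
        exact ⟨0, by simp [h0]⟩
      · obtain ⟨r₀, hr⟩ := Finset.card_eq_one.1 h1
        exact ⟨r₀, by simp [hr]⟩
    obtain ⟨r₀, hr₀⟩ := this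
    refine hg (hC r₀ g fun r hr => ?_)
    by_contra hne
    exact hr (hr₀ r ((memX g r).2 hne))
  have supp2 : ∀ g, g ≠ 0 → ∀ (u₁ u₂ : Fin I → F) (v₁ v₂ : Fin J → F),
      (∀ i j, ∑ r, φ g r * A i r * B j r = u₁ i * v₁ j + u₂ i * v₂ j) → (X g).card = 2 := by
    intro g hg u₁ u₂ v₁ v₂ hM
    obtain ⟨S, hS, hS'⟩ := hG g u₁ u₂ v₁ v₂ hM
    refine le_antisymm (le_trans (Finset.card_le_card fun r hr => ?_) hS) (cardX g hg)
    by_contra hrS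
    exact (memX g r).1 hr (hS' r hrS)
  have sum2 : ∀ g r s, r ≠ s → X g = {r, s} → ∀ i j, ∑ q, φ g q * A i q * B j q =
      φ g r * A i r * B j r + φ g s * A i s * B j s := by
    intro g r s hrs hX i j
    rw [← Finset.sum_pair (f := fun q => φ g q * A i q * B j q) hrs, ← hX]
    refine (Finset.sum_subset (Finset.subset_univ _) fun q _ hq => ?_).symm
    have : φ g q = 0 := by
      by_contra hne
      exact hq ((memX g q).2 hne)
    simp [this]
  have rank1 : ∀ g (u : Fin I → F) (v : Fin J → F),
      (∀ i j, ∑ r, φ g r * A i r * B j r = u i * v j) → g = 0 := by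
    intro g u v hM
    by_contra hg
    have h2 := supp2 g hg u 0 v 0 (by simpa using hM)
    obtain ⟨r, s, hrs, hX⟩ := Finset.card_eq_two.1 h2
    refine not_rank_one (a₁ := fun i => A i r) (a₂ := fun i => A i s) (u := u) (b₁ := fun i => B i r)
      (b₂ := fun i => B i s) (v := v) (x := φ g r) (y := φ g s) ((memX g r).1 (by simp [hX]))
      ((memX g s).1 (by simp [hX])) (hA2 r s hrs) (hB2 r s hrs) (fun i j => ?_)
    rw [← hM, sum2 g r s hrs hX]
  -- Both hyperplane properties of the second decomposition come from `rank1`: no nonzero `g` gives a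
  -- slice combination of rank at most one.
  have inj' : Function.Injective φ' := by
    rw [injective_iff_map_eq_zero]
    intro g hg
    refine rank1 g 0 0 fun i j => ?_
    rw [slice, hg]
    simp
  have single' : ∀ s x, x ≠ 0 → Pi.single s x ∉ LinearMap.range φ' := by
    rintro s x hx ⟨g, hg⟩
    have : g = 0 := by
      refine rank1 g (x • a' s) (b' s) fun i j => ?_
      rw [slice, hg, Finset.sum_eq_single s]
      · simp
      · intro t _ ht
        simp [Pi.single_eq_of_ne ht]
      · simp
    rw [this, map_zero] at hg
    have := congrFun hg s
    simp only [Pi.zero_apply, Pi.single_eq_same] at this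
    exact hx this.symm
  have finr : Module.finrank F (LinearMap.range φ') = K := by
    rw [LinearMap.finrank_range_of_inj inj']; simp
  -- The alternative decomposition also has `K + 1` terms.
  obtain rfl : R' = K + 1 := by
    have h1 := LinearMap.finrank_le_finrank_of_injective inj'
    simp only [Module.finrank_fin_fun] at h1
    by_contra hne
    obtain rfl : R' = K := by omega
    have htop : LinearMap.range φ' = ⊤ := Submodule.eq_top_of_finrank_eq (by rw [finr]; simp)
    exact single' ⟨0, by omega⟩ 1 one_ne_zero (htop ▸ Submodule.mem_top)
  -- The linear relation `l` among the vectors `c'`.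
  obtain ⟨l, hl0, hl⟩ : ∃ l : Module.Dual F (Fin (K + 1) → F), l ≠ 0 ∧
      LinearMap.range φ' ≤ LinearMap.ker l := by
    refine Submodule.exists_le_ker_of_lt_top _ (lt_top_iff_ne_top.2 fun htop => ?_)
    rw [htop, finrank_top] at finr
    simp at finr
  have hker : LinearMap.range φ' = LinearMap.ker l := by
    refine Submodule.eq_of_le_of_finrank_le hl ?_
    have h1 := l.finrank_range_add_finrank_ker
    have h2 : LinearMap.range l = ⊤ := LinearMap.range_eq_top.2 (LinearMap.surjective hl0)
    rw [h2] at h1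
    simp only [finrank_top, Module.finrank_self, Module.finrank_fin_fun] at h1
    omega
  let m : Fin (K + 1) → F := fun s => l (Pi.single s 1)
  have hm : ∀ s x, l (Pi.single s x) = x * m s := by
    intro s x
    have : (Pi.single s x : Fin (K + 1) → F) = x • Pi.single s 1 := by
      rw [← Pi.single_smul]; simp
    rw [this, map_smul, smul_eq_mul]
  have hm0 : ∀ s, m s ≠ 0 := by
    intro s hs
    refine single' s 1 one_ne_zero ?_
    rw [hker, LinearMap.mem_ker]
    exact hs
  have hE : ∀ s t, ∃ g, φ' g = Pi.single s (m t) - Pi.single t (m s) := by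
    intro s t
    change _ ∈ LinearMap.range φ'
    rw [hker, LinearMap.mem_ker, map_sub, hm, hm]
    ring
  -- `G s t` combines the slices so that only the terms `s` and `t` of the second decomposition
  -- survive.
  choose G hGφ using hE
  have G_self : ∀ s, G s s = 0 := fun s => inj' (by rw [hGφ]; simp)
  have G_symm : ∀ s t, G t s = - G s t := fun s t => inj' (by rw [map_neg, hGφ, hGφ]; simp)
  have G_tri : ∀ s t u, m u • G s t + m s • G t u + m t • G u s = 0 := by
    intro s t u
    apply inj'
    simp only [map_add, map_smul, hGφ, map_zero, smul_sub, ← Pi.single_smul, smul_eq_mul]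
    rw [mul_comm (m u) (m t), mul_comm (m u) (m s), mul_comm (m s) (m t)]
    abel
  have G_apply : ∀ s t q, φ' (G s t) q = (if q = s then m t else 0) - (if q = t then m s else 0) := by
    intro s t q
    rw [hGφ]
    simp [Pi.single_apply]
  have G_ne : ∀ s t, s ≠ t → G s t ≠ 0 := by
    intro s t hst h0
    have := G_apply s t s
    rw [h0, map_zero] at this
    simp [hst] at this
    exact hm0 t this.symm
  have G_slice : ∀ s t i j, ∑ r, φ (G s t) r * A i r * B j r =
      (m t * a' s i) * b' s j + (- m s * a' t i) * b' t j := by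
    intro s t i j
    rw [slice]
    simp only [G_apply, sub_mul, Finset.sum_sub_distrib, ite_mul, zero_mul, Finset.sum_ite_eq',
      Finset.mem_univ, if_true]
    ring
  have G_card : ∀ s t, s ≠ t → (X (G s t)).card = 2 := fun s t hst =>
    supp2 _ (G_ne s t hst) (fun i => m t * a' s i) (fun i => - m s * a' t i) (b' s) (b' t)
      (G_slice s t)
  have X_symm : ∀ s t, X (G t s) = X (G s t) := by
    intro s t
    ext r
    rw [memX, memX, G_symm, map_neg]
    simp
  have tri : ∀ s t u r, m u * φ (G s t) r + m s * φ (G t u) r + m t * φ (G u s) r = 0 := by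
    intro s t u r
    have := congrArg (fun g => φ g r) (G_tri s t u)
    simpa using this
  -- Equal supports would give a nonzero combination of `G s t` and `G s u` with one-element support.
  have X_ne : ∀ s t u, s ≠ t → s ≠ u → t ≠ u → X (G s t) ≠ X (G s u) := by
    intro s t u hst hsu htu heq
    obtain ⟨r, r', hrr, hX⟩ := Finset.card_eq_two.1 (G_card s t hst)
    have hr : φ (G s u) r ≠ 0 := (memX _ _).1 (by rw [← heq, hX]; simp)
    have hz : φ (G s t) r • G s u - φ (G s u) r • G s t = 0 := by
      refine hC r' _ fun q hq => ?_
      rw [← hφ]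
      simp only [map_sub, map_smul, Pi.sub_apply, Pi.smul_apply, smul_eq_mul]
      by_cases hqr : q = r
      · subst hqr; ring
      · have h1 : φ (G s t) q = 0 := by
          by_contra hne
          have := (memX _ _).2 hne
          rw [hX] at this
          simp [hqr, hq] at this
        have h2 : φ (G s u) q = 0 := by
          by_contra hne
          have := (memX _ _).2 hne
          rw [← heq, hX] at this
          simp [hqr, hq] at this
        rw [h1, h2]; ring
    have := congrArg (fun g => φ' g t) hz
    simp only [map_sub, map_smul, Pi.sub_apply, Pi.smul_apply, smul_eq_mul, G_apply, map_zero,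
      Pi.zero_apply] at this
    simp [hst.symm, htu] at this
    exact this.elim hr (hm0 s)
  -- By the three-term relation `tri`, disjoint supports would give `G t u` four nonzero entries.
  have X_meet : ∀ s t u, s ≠ t → s ≠ u → t ≠ u → ¬ Disjoint (X (G s t)) (X (G s u)) := by
    intro s t u hst hsu htu hd
    have hsub : X (G s t) ∪ X (G s u) ⊆ X (G t u) := by
      intro r hr
      rw [memX]
      intro h0
      have ht := tri s t u r
      rw [h0, G_symm s u, map_neg, Pi.neg_apply] at ht
      rcases Finset.mem_union.1 hr with hr | hr
      · have h1 : φ (G s u) r = 0 := by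
          by_contra hne
          exact Finset.disjoint_left.1 hd hr ((memX _ _).2 hne)
        rw [h1] at ht
        simp [hm0] at ht
        exact (memX _ _).1 hr ht
      · have h1 : φ (G s t) r = 0 := by
          by_contra hne
          exact Finset.disjoint_left.1 hd ((memX _ _).2 hne) hr
        rw [h1] at ht
        simp [hm0] at ht
        exact (memX _ _).1 hr ht
    have := Finset.card_le_card hsub
    rw [Finset.card_union_of_disjoint hd, G_card s t hst, G_card s u hsu, G_card t u htu] at this
    omega
  have star : ∀ s, ∃ r, ∀ t, t ≠ s → r ∈ X (G s t) := by
    intro s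
    obtain ⟨r, hr⟩ := star_of_pairwise_meet (Finset.univ.erase s) (by simp; omega)
      (fun t => X (G s t)) (fun t ht => G_card s t (Finset.ne_of_mem_erase ht).symm)
      (fun t ht u hu htu =>
        ⟨X_ne s t u (Finset.ne_of_mem_erase ht).symm (Finset.ne_of_mem_erase hu).symm htu,
         X_meet s t u (Finset.ne_of_mem_erase ht).symm (Finset.ne_of_mem_erase hu).symm htu⟩)
    exact ⟨r, fun t ht => hr t (by simp [ht])⟩
  choose σ hσ using star
  -- If `σ s = σ t`, the other element of `X (G s t)` violates the three-term relation.
  have σ_inj : Function.Injective σ := by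
    intro s t heq
    by_contra hst
    obtain ⟨u, hsu, htu⟩ := third s t
    have i1 := hσ s t (Ne.symm hst)
    have i2 := hσ s u hsu.symm
    have i3 := hσ t u htu.symm
    rw [← heq] at i3
    obtain ⟨x, hx, hxX⟩ : ∃ x, x ≠ σ s ∧ x ∈ X (G s t) := by
      obtain ⟨x, hx, hx'⟩ := Finset.exists_mem_ne (s := X (G s t))
        (by rw [G_card s t hst]; norm_num) (σ s)
      exact ⟨x, hx', hx⟩
    have pair : ∀ p q, p ≠ q → σ s ∈ X (G p q) → x ∈ X (G p q) → X (G p q) = {σ s, x} := by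
      intro p q hpq h1 h2
      refine (Finset.eq_of_subset_of_card_le ?_ ?_).symm
      · intro z hz
        rcases Finset.mem_insert.1 hz with rfl | h
        · exact h1
        · rw [Finset.mem_singleton] at h; subst h; exact h2
      · rw [G_card p q hpq, Finset.card_pair hx.symm]
    have e1 := pair s t hst i1 hxX
    have z2 : φ (G u s) x = 0 := by
      by_contra hne
      have hm' := (memX _ _).2 hne
      rw [X_symm] at hm'
      exact X_ne s t u hst hsu htu (e1.trans (pair s u hsu i2 hm').symm)
    have z3 : φ (G t u) x = 0 := by
      by_contra hne
      have hm' := (memX _ _).2 hne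
      refine X_ne t s u (Ne.symm hst) htu hsu ?_
      rw [X_symm, e1, pair t u htu i3 hm']
    have ht := tri s t u x
    rw [z2, z3] at ht
    simp [hm0] at ht
    exact (memX _ _).1 hxX ht
  have X_eq : ∀ s t, s ≠ t → X (G s t) = {σ s, σ t} := by
    intro s t hst
    refine (Finset.eq_of_subset_of_card_le ?_ ?_).symm
    · intro z hz
      rcases Finset.mem_insert.1 hz with rfl | h
      · exact hσ s t hst.symm
      · rw [Finset.mem_singleton] at h
        subst h
        rw [← X_symm]
        exact hσ t s hst
    · rw [G_card s t hst, Finset.card_pair (σ_inj.ne hst)]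
  have G_pair : ∀ s t, s ≠ t → ∀ i j,
      φ (G s t) (σ s) * A i (σ s) * B j (σ s) + φ (G s t) (σ t) * A i (σ t) * B j (σ t) =
      (m t * a' s i) * b' s j + (- m s * a' t i) * b' t j := by
    intro s t hst i j
    rw [← G_slice, sum2 _ _ _ (σ_inj.ne hst) (X_eq s t hst)]
  have ne1 : ∀ s t, s ≠ t → φ (G s t) (σ s) ≠ 0 := fun s t hst =>
    (memX _ _).1 (by rw [X_eq s t hst]; simp)
  have ne2 : ∀ s t, s ≠ t → φ (G s t) (σ t) ≠ 0 := fun s t hst =>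
    (memX _ _).1 (by rw [X_eq s t hst]; simp)
  have a_span : ∀ s t, s ≠ t → ∃ p q : F, ∀ i, a' s i = p * A i (σ s) + q * A i (σ t) := by
    intro s t hst
    obtain ⟨p, q, hpq⟩ := mem_span_of_rank_two (a₁ := fun i => A i (σ s)) (a₂ := fun i => A i (σ t))
      (b₁ := fun i => B i (σ s)) (b₂ := fun i => B i (σ t)) (ne1 s t hst) (ne2 s t hst)
      (hA2 _ _ (σ_inj.ne hst)) (hB2 _ _ (σ_inj.ne hst)) (G_pair s t hst)
    refine ⟨p / m t, q / m t, fun i => ?_⟩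
    have := hpq i
    have := hm0 t
    field_simp
    linear_combination hpq i
  have b_span : ∀ s t, s ≠ t → ∃ p q : F, ∀ i, b' s i = p * B i (σ s) + q * B i (σ t) := by
    intro s t hst
    obtain ⟨p, q, hpq⟩ := mem_span_of_rank_two (a₁ := fun i => B i (σ s)) (a₂ := fun i => B i (σ t))
      (b₁ := fun i => A i (σ s)) (b₂ := fun i => A i (σ t)) (u₁ := fun j => m t * b' s j)
      (u₂ := fun j => - m s * b' t j) (v₁ := a' s) (v₂ := a' t) (ne1 s t hst) (ne2 s t hst)
      (hB2 _ _ (σ_inj.ne hst)) (hA2 _ _ (σ_inj.ne hst))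
      (fun j i => by linear_combination G_pair s t hst i j)
    refine ⟨p / m t, q / m t, fun i => ?_⟩
    have := hpq i
    have := hm0 t
    field_simp
    linear_combination hpq i
  have two_others : ∀ s : Fin (K + 1), ∃ t u, s ≠ t ∧ s ≠ u ∧ t ≠ u := by
    intro s
    obtain ⟨t, h1, -⟩ := third s s
    obtain ⟨u, h2, h3⟩ := third s t
    exact ⟨t, u, h1, h2, h3⟩
  -- `a' s` lies in two planes that share only the line through column `σ s` of `A`.
  have a_par : ∀ s, ∃ p : F, ∀ i, a' s i = p * A i (σ s) := by
    intro s
    obtain ⟨t, u, hst, hsu, htu⟩ := two_others s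
    obtain ⟨p, q, h1⟩ := a_span s t hst
    obtain ⟨p', q', h2⟩ := a_span s u hsu
    have := hA _ _ _ (σ_inj.ne hst) (σ_inj.ne hsu) (σ_inj.ne htu) (p - p') q (-q')
      (fun i => by linear_combination h2 i - h1 i)
    exact ⟨p, fun i => by rw [h1, this.2.1]; ring⟩
  have b_par : ∀ s, ∃ p : F, ∀ i, b' s i = p * B i (σ s) := by
    intro s
    obtain ⟨t, u, hst, hsu, htu⟩ := two_others s
    obtain ⟨p, q, h1⟩ := b_span s t hst
    obtain ⟨p', q', h2⟩ := b_span s u hsu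
    have := hB _ _ _ (σ_inj.ne hst) (σ_inj.ne hsu) (σ_inj.ne htu) (p - p') q (-q')
      (fun i => by linear_combination h2 i - h1 i)
    exact ⟨p, fun i => by rw [h1, this.2.1]; ring⟩
  choose α hα using a_par
  choose β hβ using b_par
  have coef : ∀ s t, s ≠ t → φ (G s t) (σ s) = m t * (α s * β s) := by
    intro s t hst
    by_contra hne
    obtain ⟨d, hd1, hd2⟩ := exists_dual_pair (hB2 _ _ (σ_inj.ne hst))
    have key : ∀ i, (φ (G s t) (σ s) - m t * (α s * β s)) * A i (σ s) * ∑ j, B j (σ s) * d j +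
        (φ (G s t) (σ t) + m s * (α t * β t)) * A i (σ t) * ∑ j, B j (σ t) * d j = 0 := by
      intro i
      simp only [Finset.mul_sum, ← Finset.sum_add_distrib]
      refine Finset.sum_eq_zero fun j _ => ?_
      have := G_pair s t hst i j
      rw [hα, hα, hβ, hβ] at this
      linear_combination d j * this
    simp only [hd1, hd2, mul_one, mul_zero, add_zero] at key
    have := (hA2 _ _ (σ_inj.ne hst) (φ (G s t) (σ s) - m t * (α s * β s)) 0
      (fun i => by simpa using key i)).1
    exact hne (sub_eq_zero.1 this)
  have vanish : ∀ s t u, φ (G t u) (σ s) = α s * β s * φ' (G t u) s := by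
    intro s t u
    by_cases htu : t = u
    · subst htu
      rw [G_self]; simp
    by_cases hst : s = t
    · subst hst
      rw [coef s u htu, G_apply]
      simp [htu]
      ring
    by_cases hsu : s = u
    · subst hsu
      rw [G_symm s t, map_neg, map_neg, Pi.neg_apply, Pi.neg_apply, coef s t hst, G_apply]
      simp [hst]
      ring
    · rw [G_apply]
      have : φ (G t u) (σ s) = 0 := by
        by_contra hne
        have := (memX _ _).2 hne
        rw [X_eq t u htu] at this
        simp [σ_inj.eq_iff, hst, hsu] at this
      simp [this, hst, hsu]
  -- The vectors `G 0 t` span the whole space.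
  have span : ∀ g, g = ∑ t, (- (φ' g t / m 0)) • G 0 t := by
    intro g
    have hlg : l (φ' g) = 0 := hl ⟨g, rfl⟩
    have hsum : ∑ t, φ' g t * m t = 0 := by
      rw [← hlg]
      conv_rhs => rw [← Finset.univ_sum_single (φ' g), map_sum]
      exact Finset.sum_congr rfl fun t _ => (hm t _).symm
    apply inj'
    funext q
    simp only [map_sum, map_smul, Finset.sum_apply, Pi.smul_apply, smul_eq_mul, G_apply, mul_sub,
      Finset.sum_sub_distrib, mul_ite, mul_zero, Finset.sum_ite_eq, Finset.mem_univ, if_true]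
    have hz : ∑ t, - (φ' g t / m 0) * m t = 0 := by
      have : ∑ t, - (φ' g t / m 0) * m t = - (∑ t, φ' g t * m t) / m 0 := by
        rw [neg_div, Finset.sum_div, ← Finset.sum_neg_distrib]
        exact Finset.sum_congr rfl fun t _ => by ring
      rw [this, hsum]; simp
    have := hm0 0
    by_cases hq : q = 0
    · simp only [hq, if_true, hz]
      field_simp
      ring
    · simp only [hq, if_false, Finset.sum_const_zero]
      field_simp
      ring
  have hc : ∀ s k, C k (σ s) = α s * β s * c' s k := by
    intro s k
    have hall : ∀ g, φ g (σ s) = α s * β s * φ' g s := by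
      intro g
      rw [span g]
      simp only [map_sum, map_smul, Finset.sum_apply, Pi.smul_apply, smul_eq_mul, Finset.mul_sum,
        vanish]
      exact Finset.sum_congr rfl fun t _ => by ring
    have := hall (Pi.single k 1)
    rw [hφ, hφ'] at this
    simpa [Pi.single_apply] using this
  refine ⟨Equiv.ofBijective σ (Finite.injective_iff_bijective.1 σ_inj), fun s i j k => ?_⟩
  simp only [Equiv.ofBijective_apply]
  rw [hα, hβ, hc]
  ring

/-! ### Matrices with nonzero maximal minors; few terms -/

theorem exists_inj_superset {R n : ℕ} (hn : n ≤ R) (S : Finset (Fin R)) (hS : S.card ≤ n) :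
    ∃ e : Fin n → Fin R, Function.Injective e ∧ ∀ r ∈ S, r ∈ Set.range e := by
  obtain ⟨T, hST, hT⟩ := Finset.exists_superset_card_eq hS (by simpa using hn)
  refine ⟨T.orderEmbOfFin hT, (T.orderEmbOfFin hT).injective, fun r hr => ?_⟩
  rw [Finset.range_orderEmbOfFin]
  exact hST hr

theorem exists_inj_subset {R n : ℕ} (S : Finset (Fin R)) (hS : n ≤ S.card) :
    ∃ e : Fin n → Fin R, Function.Injective e ∧ ∀ x, e x ∈ S := by
  obtain ⟨T, hST, hT⟩ := Finset.exists_subset_card_eq hS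
  exact ⟨T.orderEmbOfFin hT, (T.orderEmbOfFin hT).injective,
    fun x => hST (Finset.orderEmbOfFin_mem T hT x)⟩

/-- An injection `h : Fin a → Fin N` extends to a splitting of `Fin N` with first part `h`. -/
theorem exists_sum_equiv {a b N : ℕ} (hN : a + b = N) (h : Fin a → Fin N)
    (hh : Function.Injective h) :
    ∃ ρ : Fin N ≃ Fin a ⊕ Fin b, ∀ x, ρ (h x) = Sum.inl x := by
  classical
  have hc : Fintype.card ↑(Set.range h)ᶜ = b := by
    rw [Fintype.card_compl_set, Set.card_range_of_injective hh]
    simp; omega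
  refine ⟨(Equiv.Set.sumCompl (Set.range h)).symm.trans
    (Equiv.sumCongr (Equiv.ofInjective h hh).symm (Fintype.equivFinOfCardEq hc)), fun x => ?_⟩
  have : (Equiv.Set.sumCompl (Set.range h)).symm (h x) = Sum.inl ⟨h x, x, rfl⟩ :=
    Equiv.Set.sumCompl_symm_apply_of_mem (Set.mem_range_self x)
  simp [this, Equiv.ofInjective_symm_apply]

/-- Every maximal square submatrix of `A` is invertible. -/
def MaxMinors {F : Type*} [Field F] {n R : ℕ} (A : Fin n → Fin R → F) : Prop :=
  ∀ e : Fin n → Fin R, Function.Injective e → (Matrix.of fun i j => A i (e j)).det ≠ 0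

theorem sum_comp_of_supp {F : Type*} [Field F] {n R : ℕ} {e : Fin n → Fin R}
    (he : Function.Injective e) (w : Fin R → F) (hw : ∀ r, w r ≠ 0 → r ∈ Set.range e) :
    ∑ r, w r = ∑ x, w (e x) := by
  classical
  rw [← Finset.sum_image (s := Finset.univ) (g := e) (f := w) (fun x _ y _ hxy => he hxy)]
  refine (Finset.sum_subset (Finset.subset_univ _) fun r _ hr => ?_).symm
  by_contra hne
  obtain ⟨x, rfl⟩ := hw r hne
  exact hr (Finset.mem_image_of_mem e (Finset.mem_univ x))

/-- Any `n` columns of `A` are linearly independent, stated for a relation `w` among all columns that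
is supported on the chosen ones. -/
theorem MaxMinors.indep {F : Type*} [Field F] {n R : ℕ} {A : Fin n → Fin R → F}
    (hA : MaxMinors A) {e : Fin n → Fin R} (he : Function.Injective e) (w : Fin R → F)
    (hw : ∀ r, w r ≠ 0 → r ∈ Set.range e) (h : ∀ i, ∑ r, w r * A i r = 0) : w = 0 := by
  have h1 : (Matrix.of fun i j => A i (e j)).mulVec (fun x => w (e x)) = 0 := by
    funext i
    rw [Pi.zero_apply, ← h i, sum_comp_of_supp he (fun r => w r * A i r)
      (fun r hr => hw r (left_ne_zero_of_mul hr))]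
    simp only [Matrix.mulVec, dotProduct, Matrix.of_apply]
    exact Finset.sum_congr rfl fun x _ => mul_comm _ _
  have h2 := Matrix.eq_zero_of_mulVec_eq_zero (hA e he) h1
  funext r
  by_contra hne
  obtain ⟨x, rfl⟩ := hw r hne
  exact hne (congrFun h2 x)

theorem MaxMinors.triple {F : Type*} [Field F] {n R : ℕ} {A : Fin n → Fin R → F}
    (hA : MaxMinors A) (h3 : 3 ≤ n) (hn : n ≤ R) (r s t : Fin R) (hrs : r ≠ s) (hrt : r ≠ t)
    (hst : s ≠ t) (x y z : F) (h : ∀ i, x * A i r + y * A i s + z * A i t = 0) :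
    x = 0 ∧ y = 0 ∧ z = 0 := by
  classical
  obtain ⟨e, he, hr⟩ := exists_inj_superset hn {r, s, t} (Finset.card_le_three.trans h3)
  have := hA.indep he (Pi.single r x + Pi.single s y + Pi.single t z) (fun q hq => ?_) (fun i => ?_)
  · have e1 := congrFun this r
    have e2 := congrFun this s
    have e3 := congrFun this t
    simp [hrs, hrt, hst, hrs.symm, hrt.symm, hst.symm] at e1 e2 e3
    exact ⟨e1, e2, e3⟩
  · by_contra hne
    refine hq ?_
    have h1 : q ≠ r := by rintro rfl; exact hne (hr _ (by simp))
    have h2 : q ≠ s := by rintro rfl; exact hne (hr _ (by simp))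
    have h3 : q ≠ t := by rintro rfl; exact hne (hr _ (by simp))
    simp [h1, h2, h3]
  · rw [← h i]
    simp [Pi.single_apply, add_mul, Finset.sum_add_distrib]

theorem MaxMinors.ortho {F : Type*} [Field F] {n R : ℕ} {A : Fin n → Fin R → F}
    (hA : MaxMinors A) {e : Fin n → Fin R} (he : Function.Injective e) (w : Fin n → F)
    (h : ∀ x, ∑ i, w i * A i (e x) = 0) : w = 0 :=
  Matrix.eq_zero_of_vecMul_eq_zero (hA e he) (funext h)

/-- The `(m+2) × 2` matrix `[u₁ u₂]` has two rows that span its row space. -/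
theorem exists_two_rows {F : Type*} [Field F] {m : ℕ} (u₁ u₂ : Fin (m + 2) → F) :
    ∃ i₁ i₂, i₁ ≠ i₂ ∧ ∀ i, ∃ x y : F, u₁ i = x * u₁ i₁ + y * u₁ i₂ ∧
      u₂ i = x * u₂ i₁ + y * u₂ i₂ := by
  by_cases hD : ∃ i₁ i₂, u₁ i₁ * u₂ i₂ - u₁ i₂ * u₂ i₁ ≠ 0
  · obtain ⟨i₁, i₂, hD⟩ := hD
    refine ⟨i₁, i₂, ?_, fun i => ⟨(u₁ i * u₂ i₂ - u₁ i₂ * u₂ i) / (u₁ i₁ * u₂ i₂ - u₁ i₂ * u₂ i₁),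
      (u₁ i₁ * u₂ i - u₁ i * u₂ i₁) / (u₁ i₁ * u₂ i₂ - u₁ i₂ * u₂ i₁), ?_, ?_⟩⟩
    · rintro rfl; exact hD (by ring)
    all_goals
      rw [div_mul_eq_mul_div, div_mul_eq_mul_div, ← add_div, eq_div_iff hD]
      ring
  · push Not at hD
    by_cases h0 : ∃ i, u₁ i ≠ 0 ∨ u₂ i ≠ 0
    · obtain ⟨i₁, h1⟩ := h0
      obtain ⟨i₂, hi⟩ := exists_ne i₁
      refine ⟨i₁, i₂, hi.symm, fun i => ?_⟩
      rcases h1 with h1 | h1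
      · refine ⟨u₁ i / u₁ i₁, 0, ?_, ?_⟩
        · field_simp; ring
        · field_simp; linear_combination hD i₁ i
      · refine ⟨u₂ i / u₂ i₁, 0, ?_, ?_⟩
        · field_simp; linear_combination hD i i₁
        · field_simp; ring
    · push Not at h0
      exact ⟨0, 1, by simp, fun i => ⟨0, 0, by simp [h0]⟩⟩

/-- A combination of at most `I` of the matrices `a_r b_rᵀ` that has rank at most two involves at
most two terms: inverting the `I × I` submatrix of `A` on the support puts every `b_r` of the support
in the span of `v₁, v₂`, whereas any three columns of `B` are independent. -/
theorem small_support {F : Type*} [Field F] {I J R : ℕ} (hI3 : 3 ≤ I) (hIJ : I ≤ J) (hJR : J ≤ R)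
    {A : Fin I → Fin R → F} {B : Fin J → Fin R → F} (hA : MaxMinors A) (hB : MaxMinors B)
    (f : Fin R → F) (u₁ u₂ : Fin I → F) (v₁ v₂ : Fin J → F)
    (hM : ∀ i j, ∑ r, f r * A i r * B j r = u₁ i * v₁ j + u₂ i * v₂ j)
    (S : Finset (Fin R)) (hS : ∀ r, r ∈ S ↔ f r ≠ 0) (hSI : S.card ≤ I) : S.card ≤ 2 := by
  classical
  by_contra hc
  obtain ⟨e, he, heS⟩ := exists_inj_superset (hIJ.trans hJR) S hSI
  set M : Matrix (Fin I) (Fin I) F := Matrix.of fun i j => A i (e j) with hMdef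
  have hdet : IsUnit M.det := isUnit_iff_ne_zero.2 (hA e he)
  have hsol : ∀ r ∈ S, ∃ α β : F, ∀ j, B j r = α * v₁ j + β * v₂ j := by
    intro r hr
    obtain ⟨x, rfl⟩ := heS r hr
    have hf := (hS _).1 hr
    refine ⟨M⁻¹.mulVec u₁ x / f (e x), M⁻¹.mulVec u₂ x / f (e x), fun j => ?_⟩
    have h1 : M.mulVec (fun y => f (e y) * B j (e y)) = v₁ j • u₁ + v₂ j • u₂ := by
      funext i
      have h2 := hM i j
      rw [sum_comp_of_supp he (fun r => f r * A i r * B j r) (fun r hr => heS r ((hS r).2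
        (left_ne_zero_of_mul (left_ne_zero_of_mul hr))))] at h2
      simp only [Pi.add_apply, Pi.smul_apply, smul_eq_mul]
      rw [mul_comm (v₁ j), mul_comm (v₂ j), ← h2]
      simp only [Matrix.mulVec, dotProduct, hMdef, Matrix.of_apply]
      exact Finset.sum_congr rfl fun y _ => by ring
    have h3 := congrArg M⁻¹.mulVec h1
    rw [Matrix.mulVec_mulVec, Matrix.nonsing_inv_mul M hdet, Matrix.one_mulVec, Matrix.mulVec_add,
      Matrix.mulVec_smul, Matrix.mulVec_smul] at h3
    have h4 := congrFun h3 x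
    simp only [Pi.add_apply, Pi.smul_apply, smul_eq_mul] at h4
    field_simp
    linear_combination h4
  obtain ⟨r, s, t, hr, hs, ht, hrs, hrt, hst⟩ := Finset.two_lt_card_iff.1 (not_le.1 hc)
  obtain ⟨α₁, β₁, h1⟩ := hsol r hr
  obtain ⟨α₂, β₂, h2⟩ := hsol s hs
  obtain ⟨α₃, β₃, h3⟩ := hsol t ht
  have ind := hB.triple (hI3.trans hIJ) hJR r s t hrs hrt hst
  have k := (ind (α₂ * β₃ - α₃ * β₂) (α₃ * β₁ - α₁ * β₃) (α₁ * β₂ - α₂ * β₁)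
    (fun j => by rw [h1, h2, h3]; ring)).2.2
  have k1 := (ind β₂ (-β₁) 0 (fun j => by rw [h1, h2]; linear_combination v₁ j * k)).2.1
  have k2 := (ind α₂ (-α₁) 0 (fun j => by rw [h1, h2]; linear_combination - v₂ j * k)).2.1
  rw [neg_eq_zero] at k1 k2
  exact one_ne_zero (ind 1 0 0 (fun j => by rw [h1, k1, k2]; ring)).1

/-! ### Parametrising the exceptional triples; many terms -/

/-- If the columns of `N` indexed by `S` span `F^m`, some `m` of them form a basis. -/
theorem exists_invertible_cols {F : Type*} [Field F] {m R : ℕ} (N : Fin m → Fin R → F)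
    (S : Finset (Fin R))
    (hN : ∀ y : Fin m → F, (∀ r ∈ S, ∑ p, y p * N p r = 0) → y = 0) :
    ∃ h : Fin m → Fin R, Function.Injective h ∧ (∀ x, h x ∈ S) ∧
      (Matrix.of fun p x => N p (h x)).det ≠ 0 := by
  classical
  set s : Set (Fin m → F) := (fun r p => N p r) '' (S : Set (Fin R)) with hs
  have htop : Submodule.span F s = ⊤ := by
    by_contra hne
    obtain ⟨φ, hφ, hle⟩ := Submodule.exists_le_ker_of_lt_top _ (lt_top_iff_ne_top.2 hne)
    have hφv : ∀ v, φ v = ∑ p, φ (Pi.single p 1) * v p := by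
      intro v
      rw [LinearMap.pi_apply_eq_sum_univ φ v]
      refine Finset.sum_congr rfl fun p _ => ?_
      rw [smul_eq_mul, mul_comm]
      congr 2
      funext q
      simp [Pi.single_apply, eq_comm]
    refine hφ (LinearMap.ext fun v => ?_)
    have h0 := hN (fun p => φ (Pi.single p 1)) (fun r hr => by
      rw [← hφv]
      exact hle (Submodule.subset_span ⟨r, hr, rfl⟩))
    rw [hφv]
    simp [fun p => congrFun h0 p]
  obtain ⟨w, hw, -, hli⟩ := Submodule.exists_fun_fin_finrank_span_eq F s
  have hm : m = Module.finrank F (Submodule.span F s) := by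
    rw [htop, finrank_top, Module.finrank_fin_fun]
  choose h hS hhw using hw
  have hli' : LinearIndependent F (fun x : Fin m => w (Fin.cast hm x)) :=
    hli.comp _ (Fin.cast_injective hm)
  refine ⟨fun x => h (Fin.cast hm x), fun x y hxy => ?_, fun x => hS _, ?_⟩
  · refine hli'.injective ?_
    simp only at hxy ⊢
    rw [← hhw, ← hhw, hxy]
  · have hcol : LinearIndependent F
        (Matrix.of fun p (x : Fin m) => N p (h (Fin.cast hm x))).col := by
      convert hli' using 1
      funext x
      rw [← hhw]
      rfl
    exact ((Matrix.isUnit_iff_isUnit_det _).1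
      (Matrix.linearIndependent_cols_iff_isUnit.1 hcol)).ne_zero

/-- The source of `badMap`, consisting of tuples `(A₀, P, E, u, f, C₀, g, B₀)`: two rows `A₀` of `A`;
the coordinates `u` of the other rows along these two; the independent columns `P` of the remainder;
the coefficients `E` through which its other columns, and the determined columns of `B`, are
expressed; the coefficients `f` of the slice combination; all rows `C₀` of `C` but one, with the
weights `g` of their slices; and the free columns `B₀` of `B`. -/
abbrev BadParam (F : Type*) (m n K q R : ℕ) : Type _ :=
  (Fin 2 → Fin R → F) × (Fin m → Fin m → F) × (Fin m → Fin q → F) × (Fin m → Fin 2 → F) ×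
    (Fin R → F) × (Fin K → Fin R → F) × (Fin K → F) × (Fin (n + 2) → Fin q → F)

/-- Parametrises the triples `(A, B, C)` for which the slice combination with coefficient vector `f`
has rank at most two. `ι` singles out two rows of `A`, `ρ` singles out `m` columns on which the
remaining rows, reduced modulo the two, form a basis `P`, and `k₀` is a slice of weight one. -/
def badMap {F : Type*} [Field F] {m n K q R : ℕ} (ι : Fin (m + 2) ≃ Fin 2 ⊕ Fin m)
    (ρ : Fin R ≃ Fin m ⊕ Fin q) (k₀ : Fin (K + 1)) :
    BadParam F m n K q R →
      (Fin (m + 2) → Fin R → F) × (Fin (n + 2) → Fin R → F) × (Fin (K + 1) → Fin R → F) :=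
  fun (A₀, P, E, u, f, C₀, g, B₀) =>
    (fun i r => Sum.elim (fun l => A₀ l r)
      (fun p => u p 0 * A₀ 0 r + u p 1 * A₀ 1 r + Sum.elim (fun x => P p x)
        (fun t => ∑ x, P p x * f (ρ.symm (Sum.inl x)) * E x t) (ρ r)) (ι i),
    fun j r => Sum.elim (fun x => - ∑ t, E x t * f (ρ.symm (Sum.inr t)) * B₀ j t)
      (fun t => B₀ j t) (ρ r),
    fun k r => k₀.insertNth (α := fun _ => F) (f r - ∑ l, C₀ l r * g l) (fun l => C₀ l r) k)

/-- A combination of at least `I = m + 2` of the matrices `a_r b_rᵀ` that has rank at most two puts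
`(A, B, C)` in the range of a `badMap`. -/
theorem large_support {F : Type*} [Field F] {m n K q R : ℕ} (hq : m + q = R)
    {A : Fin (m + 2) → Fin R → F} {B : Fin (n + 2) → Fin R → F} {C : Fin (K + 1) → Fin R → F}
    (hA : MaxMinors A) (g : Fin (K + 1) → F) (k₀ : Fin (K + 1)) (hk : g k₀ = 1)
    (u₁ u₂ : Fin (m + 2) → F) (v₁ v₂ : Fin (n + 2) → F)
    (hM : ∀ i j, ∑ r, (∑ k, C k r * g k) * A i r * B j r = u₁ i * v₁ j + u₂ i * v₂ j)
    (S : Finset (Fin R)) (hS : ∀ r, r ∈ S ↔ ∑ k, C k r * g k ≠ 0) (hSI : m + 2 ≤ S.card) :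
    ∃ ι : Fin (m + 2) ≃ Fin 2 ⊕ Fin m, ∃ ρ : Fin R ≃ Fin m ⊕ Fin q,
      (A, B, C) ∈ Set.range (badMap ι ρ k₀) := by
  classical
  set f : Fin R → F := fun r => ∑ k, C k r * g k with hf
  obtain ⟨i₁, i₂, hi, hu⟩ := exists_two_rows u₁ u₂
  choose x y hx hy using hu
  obtain ⟨ι, hι⟩ := exists_sum_equiv (show 2 + m = m + 2 by omega) ![i₁, i₂] (by
    intro a b
    fin_cases a <;> fin_cases b <;> simp [hi, hi.symm])
  have hι1 : ι.symm (Sum.inl 0) = i₁ := by rw [Equiv.symm_apply_eq]; exact (hι 0).symm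
  have hι2 : ι.symm (Sum.inl 1) = i₂ := by rw [Equiv.symm_apply_eq]; exact (hι 1).symm
  set τ : Fin m → Fin (m + 2) := fun p => ι.symm (Sum.inr p) with hτ
  set N : Fin m → Fin R → F := fun p r => A (τ p) r - x (τ p) * A i₁ r - y (τ p) * A i₂ r with hNdef
  -- `N` consists of the other rows of `A` reduced modulo the rows `i₁, i₂`; by the choice of
  -- `i₁, i₂` the reduction kills the right-hand side.
  have hNB : ∀ p j, ∑ r, f r * N p r * B j r = 0 := by
    intro p j
    have h1 := hM (τ p) j
    rw [hx (τ p), hy (τ p)] at h1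
    have h2 : ∑ r, f r * N p r * B j r = ∑ r, f r * A (τ p) r * B j r
        - x (τ p) * ∑ r, f r * A i₁ r * B j r - y (τ p) * ∑ r, f r * A i₂ r * B j r := by
      rw [Finset.mul_sum, Finset.mul_sum, ← Finset.sum_sub_distrib, ← Finset.sum_sub_distrib]
      exact Finset.sum_congr rfl fun r _ => by simp only [hNdef]; ring
    rw [h2, h1, hM i₁ j, hM i₂ j]
    ring
  obtain ⟨h, hh, hhS, hdet⟩ := exists_invertible_cols N S (by
    intro z hz
    obtain ⟨e, he, heS⟩ := exists_inj_subset S hSI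
    -- a relation `z` between the rows of `N` on `S` lifts to one between the rows of `A`
    have h0 := hA.ortho he (fun i => Sum.elim
      ![- ∑ p, z p * x (τ p), - ∑ p, z p * y (τ p)] z (ι i)) (fun a => by
        have h1 := hz _ (heS a)
        rw [← ι.symm.sum_comp, Fintype.sum_sum_type]
        simp only [Equiv.apply_symm_apply, Sum.elim_inl, Sum.elim_inr, Fin.sum_univ_two, hι1, hι2,
          Matrix.cons_val_zero, Matrix.cons_val_one]
        rw [← h1, neg_mul, neg_mul, Finset.sum_mul, Finset.sum_mul, ← Finset.sum_neg_distrib,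
          ← Finset.sum_neg_distrib, ← Finset.sum_add_distrib, ← Finset.sum_add_distrib]
        exact Finset.sum_congr rfl fun p _ => by simp only [hNdef, hτ]; ring)
    funext p
    simpa [hτ] using congrFun h0 (τ p))
  obtain ⟨ρ, hρ⟩ := exists_sum_equiv hq h hh
  have hρ' : ∀ a, ρ.symm (Sum.inl a) = h a := fun a => by
    rw [Equiv.symm_apply_eq]; exact (hρ a).symm
  set P : Matrix (Fin m) (Fin m) F := Matrix.of fun p a => N p (h a) with hP
  have hPu : IsUnit P.det := isUnit_iff_ne_zero.2 hdet
  have hfh : ∀ a, f (h a) ≠ 0 := fun a => (hS _).1 (hhS a)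
  set E : Fin m → Fin q → F := fun a t =>
    P⁻¹.mulVec (fun p => N p (ρ.symm (Sum.inr t))) a / f (h a) with hE
  have hPE : ∀ p t, ∑ a, P p a * f (h a) * E a t = N p (ρ.symm (Sum.inr t)) := by
    intro p t
    have h1 : P.mulVec (P⁻¹.mulVec (fun p => N p (ρ.symm (Sum.inr t))))
        = fun p => N p (ρ.symm (Sum.inr t)) := by
      rw [Matrix.mulVec_mulVec, Matrix.mul_nonsing_inv P hPu, Matrix.one_mulVec]
    rw [← congrFun h1 p]
    simp only [Matrix.mulVec.eq_1 P, dotProduct]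
    refine Finset.sum_congr rfl fun a _ => ?_
    simp only [hE]
    have := hfh a
    field_simp
  have hB : ∀ a j, B j (h a) = - ∑ t, E a t * f (ρ.symm (Sum.inr t)) * B j (ρ.symm (Sum.inr t)) := by
    intro a j
    have h1 : P.mulVec (fun a => f (h a) * (B j (h a) +
        ∑ t, E a t * f (ρ.symm (Sum.inr t)) * B j (ρ.symm (Sum.inr t)))) = 0 := by
      funext p
      have h2 := hNB p j
      rw [← ρ.symm.sum_comp, Fintype.sum_sum_type] at h2
      rw [Pi.zero_apply, ← h2]
      simp only [hρ', Matrix.mulVec, dotProduct, mul_add, Finset.sum_add_distrib]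
      congr 1
      · exact Finset.sum_congr rfl fun a _ => by simp only [hP, Matrix.of_apply]; ring
      · simp only [← hPE, Finset.mul_sum, Finset.sum_mul]
        rw [Finset.sum_comm]
        exact Finset.sum_congr rfl fun a _ => Finset.sum_congr rfl fun t _ => by ring
    have h3 := congrFun (Matrix.eq_zero_of_mulVec_eq_zero hdet h1) a
    have h4 := (mul_eq_zero.1 h3).resolve_left (hfh a)
    exact eq_neg_of_add_eq_zero_left h4
  refine ⟨ι, ρ, (fun l r => A (ι.symm (Sum.inl l)) r, P, E, fun p => ![x (τ p), y (τ p)], f,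
    fun l => C (k₀.succAbove l), fun l => g (k₀.succAbove l),
    fun j t => B j (ρ.symm (Sum.inr t))), ?_⟩
  refine Prod.ext ?_ (Prod.ext ?_ ?_)
  · funext i r
    obtain ⟨s, rfl⟩ := ι.symm.surjective i
    obtain ⟨c, rfl⟩ := ρ.symm.surjective r
    rcases s with l | p
    · simp [badMap]
    · rcases c with a | t
      · simp only [badMap, Equiv.apply_symm_apply, Sum.elim_inl, Sum.elim_inr, hι1, hι2,
          Matrix.cons_val_zero, Matrix.cons_val_one, hP, Matrix.of_apply, hNdef, hρ, hρ', hτ]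
        ring
      · simp only [badMap, Equiv.apply_symm_apply, Sum.elim_inr, hι1, hι2,
          Matrix.cons_val_zero, Matrix.cons_val_one, hρ', hPE]
        simp only [hNdef, hτ]
        ring
  · funext j r
    obtain ⟨c, rfl⟩ := ρ.symm.surjective r
    rcases c with a | t
    · simp only [badMap, Sum.elim_inl, hρ, hρ', ← hB]
    · simp only [badMap, Equiv.apply_symm_apply, Sum.elim_inr]
  · funext k r
    simp only [badMap]
    refine Fin.succAboveCases k₀ ?_ (fun l => ?_) k
    · simp only [Fin.insertNth_apply_same, hf]
      rw [Fin.sum_univ_succAbove _ k₀, hk]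
      ring
    · simp only [Fin.insertNth_apply_succAbove]

/-! ### The exceptional set is null -/

theorem finrank_prod_real (X Y : Type*) [NormedAddCommGroup X] [NormedSpace ℝ X]
    [FiniteDimensional ℝ X] [NormedAddCommGroup Y] [NormedSpace ℝ Y] [FiniteDimensional ℝ Y] :
    Module.finrank ℝ (X × Y) = Module.finrank ℝ X + Module.finrank ℝ Y :=
  Module.finrank_prod

theorem isAddHaarMeasure_prod (X Y : Type*) [NormedAddCommGroup X] [NormedSpace ℝ X]
    [FiniteDimensional ℝ X] [MeasureSpace X] [BorelSpace X]
    [(volume : Measure X).IsAddHaarMeasure] [NormedAddCommGroup Y] [NormedSpace ℝ Y]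
    [FiniteDimensional ℝ Y] [MeasureSpace Y] [BorelSpace Y]
    [(volume : Measure Y).IsAddHaarMeasure] :
    BorelSpace (X × Y) ∧ (volume : Measure (X × Y)).IsAddHaarMeasure := by
  have := FiniteDimensional.proper_real X
  have := FiniteDimensional.proper_real Y
  exact ⟨inferInstance, by apply Measure.prod.instIsAddHaarMeasure⟩

/-- The range of `badMap` is null because its source has one dimension over `F` less than its target:
the `m` determined columns of `B` save `m (n + 2)` parameters, while `u` and `g` cost
`2 m + K = m (n + 2) - 1`. -/
theorem badMap_null (F : Type*) [RCLike F] [MeasureSpace F] [BorelSpace F]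
    [(volume : Measure F).IsAddHaarMeasure] {m n K q R : ℕ} (hq : m + q = R) (hK : m * n = K + 1)
    (ι : Fin (m + 2) ≃ Fin 2 ⊕ Fin m) (ρ : Fin R ≃ Fin m ⊕ Fin q) (k₀ : Fin (K + 1)) :
    ∀ᵐ p : (Fin (m + 2) → Fin R → F) × (Fin (n + 2) → Fin R → F) × (Fin (K + 1) → Fin R → F),
      p ∉ Set.range (badMap ι ρ k₀) := by
  rw [ae_iff]
  simp only [not_not, Set.ofPred_mem_eq]
  have h1 : ∀ a : ℕ, (volume : Measure (Fin a → Fin R → F)).IsAddHaarMeasure := fun a => by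
    apply Measure.pi.isAddHaarMeasure
  obtain ⟨_, _⟩ := isAddHaarMeasure_prod (Fin (n + 2) → Fin R → F) (Fin (K + 1) → Fin R → F)
  obtain ⟨_, _⟩ := isAddHaarMeasure_prod (Fin (m + 2) → Fin R → F)
    ((Fin (n + 2) → Fin R → F) × (Fin (K + 1) → Fin R → F))
  refine range_null _ ?_ _ ?_
  · simp only [BadParam, finrank_prod_real, Module.finrank_pi_fintype, Finset.sum_const,
      Finset.card_univ, Fintype.card_fin, smul_eq_mul]
    have hF : 0 < Module.finrank ℝ F := Module.finrank_pos
    generalize Module.finrank ℝ F = d at *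
    subst hq
    -- the parameter space is smaller by exactly `d = dim_ℝ F`
    have key : (m + 2) * ((m + q) * d) + ((n + 2) * ((m + q) * d) + (K + 1) * ((m + q) * d)) =
        2 * ((m + q) * d) + (m * (m * d) + (m * (q * d) + (m * (2 * d) + ((m + q) * d +
          (K * ((m + q) * d) + (K * d + (n + 2) * (q * d))))))) + d := by
      linear_combination d * hK
    omega
  · refine Differentiable.prodMk ?_ (Differentiable.prodMk ?_ ?_)
    · rw [differentiable_pi]; intro i
      rw [differentiable_pi]; intro r
      rcases ι i with l | p
      · simp only [Sum.elim_inl]; fun_prop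
      · rcases ρ r with a | t
        · simp only [Sum.elim_inl, Sum.elim_inr]; fun_prop
        · simp only [Sum.elim_inr]; fun_prop
    · rw [differentiable_pi]; intro j
      rw [differentiable_pi]; intro r
      rcases ρ r with a | t
      · simp only [Sum.elim_inl]; fun_prop
      · simp only [Sum.elim_inr]; fun_prop
    · rw [differentiable_pi]; intro k
      rw [differentiable_pi]; intro r
      refine Fin.succAboveCases k₀ ?_ (fun l => ?_) k
      · simp only [Fin.insertNth_apply_same]; fun_prop
      · simp only [Fin.insertNth_apply_succAbove]; fun_prop

theorem maxMinors_ae (F : Type*) [RCLike F] [MeasureSpace F] [BorelSpace F]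
    [(volume : Measure F).IsAddHaarMeasure] (n R : ℕ) :
    ∀ᵐ A : Fin n → Fin R → F, MaxMinors A := by
  refine ae_all_iff.2 fun e => ?_
  by_cases he : Function.Injective e
  · filter_upwards [det_ae F e he] with A hA _ using hA
  · exact Filter.Eventually.of_forall fun A h => absurd h he

/-! ### Generic uniqueness -/

/-- Slice combinations of rank at most two involve at most two terms, if `A` and `B` have nonzero
maximal minors and `(A, B, C)` avoids the range of every `badMap`. -/
theorem rank_two_slices {F : Type*} [Field F] {m n K q : ℕ} (hm : 2 ≤ m) (hmn : m ≤ n)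
    (hK : m * n = K + 1) (hq : m + q = K + 1 + 1)
    {A : Fin (m + 2) → Fin (K + 1 + 1) → F} {B : Fin (n + 2) → Fin (K + 1 + 1) → F}
    {C : Fin (K + 1) → Fin (K + 1 + 1) → F} (hA : MaxMinors A) (hB : MaxMinors B)
    (hbad : ∀ (ι : Fin (m + 2) ≃ Fin 2 ⊕ Fin m) (ρ : Fin (K + 1 + 1) ≃ Fin m ⊕ Fin q)
      (k₀ : Fin (K + 1)), (A, B, C) ∉ Set.range (badMap ι ρ k₀))
    (g : Fin (K + 1) → F) (u₁ u₂ : Fin (m + 2) → F) (v₁ v₂ : Fin (n + 2) → F)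
    (hM : ∀ i j, ∑ r, (∑ k, C k r * g k) * A i r * B j r = u₁ i * v₁ j + u₂ i * v₂ j) :
    ∃ S : Finset (Fin (K + 1 + 1)), S.card ≤ 2 ∧ ∀ r ∉ S, ∑ k, C k r * g k = 0 := by
  classical
  refine ⟨Finset.univ.filter fun r => ∑ k, C k r * g k ≠ 0, ?_, fun r hr => by simpa using hr⟩
  set S := Finset.univ.filter fun r => ∑ k, C k r * g k ≠ 0 with hSdef
  have hS : ∀ r, r ∈ S ↔ ∑ k, C k r * g k ≠ 0 := fun r => by simp [hSdef]
  rcases le_or_gt S.card (m + 2) with hc | hc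
  · exact small_support (by omega) (by omega) (by nlinarith) hA hB _ u₁ u₂ v₁ v₂ hM S hS hc
  exfalso
  obtain ⟨k₀, hk₀⟩ : ∃ k₀, g k₀ ≠ 0 := by
    by_contra hg
    push Not at hg
    obtain ⟨r, hr⟩ := Finset.card_pos.1 (show 0 < S.card by omega)
    exact (hS r).1 hr (by simp [hg])
  -- rescale so that `g k₀ = 1`
  have hsc : ∀ r, ∑ k, C k r * (g k / g k₀) = (∑ k, C k r * g k) / g k₀ := fun r => by
    rw [Finset.sum_div]; exact Finset.sum_congr rfl fun _ _ => by ring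
  obtain ⟨ι, ρ, h⟩ := large_support (B := B) (C := C) hq hA (fun k => g k / g k₀) k₀ (div_self hk₀)
    (fun i => u₁ i / g k₀) (fun i => u₂ i / g k₀) v₁ v₂ (fun i j => by
      simp only [hsc]
      rw [div_mul_eq_mul_div, div_mul_eq_mul_div, ← add_div, ← hM i j, Finset.sum_div]
      exact Finset.sum_congr rfl fun _ _ => by ring) S
    (fun r => by rw [hS, hsc, Ne, Ne, div_eq_zero_iff, not_or]; exact ⟨fun h => ⟨h, hk₀⟩, And.left⟩)
    hc.le
  exact hbad ι ρ k₀ h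

theorem generic_unique (F : Type*) [RCLike F] [MeasureSpace F] [BorelSpace F]
    [(volume : Measure F).IsAddHaarMeasure] {m n K : ℕ} (hm : 2 ≤ m) (hmn : m ≤ n)
    (hK : m * n = K + 1) : CPDGenericallyUnique F (m + 2) (n + 2) (K + 1) (K + 1 + 1) := by
  obtain ⟨q, hq⟩ : ∃ q, m + q = K + 1 + 1 := ⟨K + 1 + 1 - m, by
    have : m ≤ K + 1 + 1 := by nlinarith
    omega⟩
  have hall : ∀ᵐ p : (Fin (m + 2) → Fin (K + 1 + 1) → F) × (Fin (n + 2) → Fin (K + 1 + 1) → F) ×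
      (Fin (K + 1) → Fin (K + 1 + 1) → F),
      ∀ (ι : Fin (m + 2) ≃ Fin 2 ⊕ Fin m) (ρ : Fin (K + 1 + 1) ≃ Fin m ⊕ Fin q)
        (k₀ : Fin (K + 1)), p ∉ Set.range (badMap ι ρ k₀) :=
    ae_all_iff.2 fun ι => ae_all_iff.2 fun ρ => ae_all_iff.2 fun k₀ => badMap_null F hq hK ι ρ k₀
  have hAae : ∀ᵐ p : (Fin (m + 2) → Fin (K + 1 + 1) → F) × (Fin (n + 2) → Fin (K + 1 + 1) → F) ×
      (Fin (K + 1) → Fin (K + 1 + 1) → F), MaxMinors p.1 :=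
    Measure.quasiMeasurePreserving_fst.ae (maxMinors_ae F (m + 2) (K + 1 + 1))
  have hBae : ∀ᵐ p : (Fin (m + 2) → Fin (K + 1 + 1) → F) × (Fin (n + 2) → Fin (K + 1 + 1) → F) ×
      (Fin (K + 1) → Fin (K + 1 + 1) → F), MaxMinors p.2.1 :=
    (Measure.quasiMeasurePreserving_fst.comp Measure.quasiMeasurePreserving_snd).ae
      (maxMinors_ae F (n + 2) (K + 1 + 1))
  have hCae : ∀ᵐ p : (Fin (m + 2) → Fin (K + 1 + 1) → F) × (Fin (n + 2) → Fin (K + 1 + 1) → F) ×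
      (Fin (K + 1) → Fin (K + 1 + 1) → F), MaxMinors p.2.2 :=
    (Measure.quasiMeasurePreserving_snd.comp Measure.quasiMeasurePreserving_snd).ae
      (maxMinors_ae F (K + 1) (K + 1 + 1))
  unfold CPDGenericallyUnique
  rw [← ae_iff (p := fun p : (Fin (m + 2) → Fin (K + 1 + 1) → F) ×
    (Fin (n + 2) → Fin (K + 1 + 1) → F) × (Fin (K + 1) → Fin (K + 1 + 1) → F) =>
      CPDUnique (cpdSum p.1 p.2.1 p.2.2))]
  filter_upwards [hall, hAae, hBae, hCae] with p hbad hA hB hC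
  obtain ⟨A, B, C⟩ := p
  simp only at hA hB hC ⊢
  have hK4 : 4 ≤ K + 1 := by nlinarith
  have hmK : m + 2 ≤ K + 1 + 1 := by nlinarith
  have hnK : n + 2 ≤ K + 1 + 1 := by nlinarith
  have hAt := hA.triple (by omega) hmK
  have hBt := hB.triple (by omega) hnK
  have hCt := hC.triple (by omega) (by omega)
  have rigid : ∀ {R' : ℕ}, R' ≤ K + 1 + 1 → ∀ a b c, IsPD (cpdSum A B C) R' a b c →
      ∃ e : Fin R' ≃ Fin (K + 1 + 1), ∀ s i j k,
        a s i * b s j * c s k = A i (e s) * B j (e s) * C k (e s) := by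
    intro R' hR' a b c h
    refine cpd_rigid hK4 A B C hAt hBt (fun r₀ g hg => ?_) (rank_two_slices hm hmn hK hq hA hB hbad)
      hR' a b c h.2.2.2
    refine hC.ortho (e := r₀.succAbove) Fin.succAbove_right_injective g fun x => ?_
    rw [← hg _ (Fin.succAbove_ne r₀ x)]
    exact Finset.sum_congr rfl fun _ _ => mul_comm _ _
  -- three independent columns are in particular nonzero
  have nz : ∀ {a : ℕ} {M : Fin a → Fin (K + 1 + 1) → F}, (∀ r s t, r ≠ s → r ≠ t → s ≠ t →
      ∀ x y z : F, (∀ i, x * M i r + y * M i s + z * M i t = 0) → x = 0 ∧ y = 0 ∧ z = 0) →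
      ∀ r, (fun i => M i r) ≠ 0 := by
    intro a M h r h0
    obtain ⟨s, hs⟩ := exists_ne r
    obtain ⟨t, ht⟩ : ∃ t, t ∉ ({r, s} : Finset (Fin (K + 1 + 1))) := by
      by_contra hcon
      push Not at hcon
      have h1 := Finset.card_le_card (fun t _ => hcon t : Finset.univ ⊆ ({r, s} : Finset _))
      have h2 := Finset.card_le_two (a := r) (b := s)
      rw [Finset.card_univ, Fintype.card_fin] at h1
      omega
    simp only [Finset.mem_insert, Finset.mem_singleton, not_or] at ht
    refine one_ne_zero (h r s t hs.symm (Ne.symm ht.1) (Ne.symm ht.2) 1 0 0 fun i => ?_).1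
    have := congrFun h0 i
    simp only [Pi.zero_apply] at this
    rw [this]; ring
  have hrank : tensorRank (cpdSum A B C) ≤ K + 1 + 1 :=
    Nat.sInf_le ⟨fun r i => A i r, fun r j => B j r, fun r k => C k r, nz hAt, nz hBt, nz hCt,
      fun i j k => rfl⟩
  intro a a' b b' c c' h h'
  obtain ⟨e, he⟩ := rigid hrank a b c h
  obtain ⟨e', he'⟩ := rigid hrank a' b' c' h'
  refine ⟨e.trans e'.symm, fun r i j k => ?_⟩
  rw [he, he', Equiv.trans_apply, Equiv.apply_symm_apply]

/-- If `4 ≤ I ≤ J`, `K = (I−2)(J−2)` and `R = (I−2)(J−2) + 1`, then for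
`F = ℝ` and `F = ℂ` the CPD of an `I×J×K` tensor of rank `R` is generically unique. -/
theorem statement18 (I J K R : ℕ) (hI : 4 ≤ I) (hIJ : I ≤ J)
    (hK : K = (I - 2) * (J - 2)) (hR : R = (I - 2) * (J - 2) + 1) :
    CPDGenericallyUnique ℝ I J K R ∧ CPDGenericallyUnique ℂ I J K R := by
  obtain ⟨m, rfl⟩ := Nat.exists_eq_add_of_le' (show 2 ≤ I by omega)
  obtain ⟨n, rfl⟩ := Nat.exists_eq_add_of_le' (show 2 ≤ J by omega)
  simp only [Nat.add_sub_cancel] at hK hR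
  obtain ⟨K', hK'⟩ := Nat.exists_eq_add_of_le' (show 1 ≤ m * n by nlinarith)
  rw [hK'] at hK hR
  subst hK hR
  exact ⟨generic_unique ℝ (by omega) (by omega) hK', generic_unique ℂ (by omega) (by omega) hK'⟩
end
end
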